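/- arXiv:2507.06716 — 6 statements merged into one kernel-verified Lean document; each statement's English description precedes it below -/
import Mathlib

section
/- Optimality near infinity: let σ ∈ (0,1], σ < α < min{3/2, 1+σ}, and suppose that (−Δ_ℕ)^σ − W_{α,σ} is critical, i.e., Q^σ(f) ≥ Σ_{n≥1} W_{α,σ}(n)f(n)² for all finitely supported f and no nonzero W̃ : ℕ → [0,∞) satisfies Q^σ(f) ≥ Σ_{n≥1}(W_{α,σ}(n)+W̃(n))f(n)² for all finitely supported f. If K ⊆ ℕ is a finite set and W' : ℕ → [0,∞) is such that Q^σ(φ) ≥ Σ_{n≥1}(W_{α,σ}(n)+W'(n))·φ(n)² for every finitely supported φ : ℕ → ℝ vanishing on K, then Σ_{n≥1} W'(n)·I_α(n)² < ∞. -/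
open Real Filter

/-- Generalized binomial coefficient via the Gamma function. -/
noncomputable def rbinom (a b : ℝ) : ℝ :=
  Real.Gamma (a + 1) / (Real.Gamma (b + 1) * Real.Gamma (a - b + 1))

/-- Kernel of the fractional Laplacian `(-Δ_ℕ)^σ` on the discrete half-line. -/
noncomputable def Kker (σ : ℝ) (m n : ℕ) : ℝ :=
  (-1 : ℝ) ^ (m + n) *
    (rbinom (2 * σ) (σ + m - n) - rbinom (2 * σ) (σ + m + n))

/-- Quadratic form of `(-Δ_ℕ)^σ` (used for finitely supported `f` with `f 0 = 0`). -/
noncomputable def Qform (σ : ℝ) (f : ℕ → ℝ) : ℝ :=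
  ∑' m : ℕ, ∑' n : ℕ, Kker σ m n * f m * f n

/-- The Hardy-weight `W_{α,σ}`. -/
noncomputable def Wweight (σ α : ℝ) (n : ℕ) : ℝ :=
  4 ^ σ * (Real.Gamma (3/2 - α + σ) * Real.Gamma α /
            (Real.Gamma (α - σ) * Real.Gamma (3/2 - α))) *
    (Real.Gamma (n + α - σ - 1) * Real.Gamma (n - α + 2) /
      (Real.Gamma (n - α + σ + 2) * Real.Gamma (n + α - 1)))

/-- The Riesz potential `I_α`. -/
noncomputable def Riesz (α : ℝ) (n : ℕ) : ℝ :=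
  (4 * n / (4 ^ α * Real.sqrt 2)) * Real.Gamma (3/2 - α) *
    Real.Gamma (n + α - 1) / (Real.Gamma α * Real.Gamma (n - α + 2))

/-!
The Riesz potential `I_α` is, up to a constant, the sequence of sine coefficients of
`(2 - 2 cos θ) ^ (-α) * sin θ`, and `(-Δ_ℕ)^σ` acts on sine series as multiplication by
`(2 - 2 cos θ) ^ σ`. Hence `(-Δ_ℕ)^σ I_α = I_{α - σ} = W_{α,σ} I_α`: the Riesz potential is a
positive harmonic function for the Hardy operator, whose off-diagonal entries are nonpositive.

The ground state representation `Q(u g) = ½ ∑ₘₙ -k(m,n) u(m) u(n) (g(m) - g(n))²` bounds the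
jumps of `f / I_α` by the energy of `f`. Criticality provides a null sequence `fⱼ` normalized at
one vertex, and connectedness then forces `fⱼ → I_α` pointwise. Setting `fⱼ` to zero on `K` costs
only bounded energy, by the parallelogram law and nonnegativity of the form, so the improved
inequality off `K` bounds `∑ W' fⱼ²` over finite sets away from `K` uniformly in `j`; let `j → ∞`.
-/

section KernelForm

variable {ι : Type*}

/-- The bilinear form `(f, g) ↦ ∑ₘ ∑ₙ k m n f(m) g(n)` on finitely supported functions; its diagonal
is the energy functional of the (infinite) matrix `k`. -/
noncomputable def kernelForm (k : Matrix ι ι ℝ) : LinearMap.BilinForm ℝ (ι →₀ ℝ) :=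
  Finsupp.linearCombination ℝ fun m => Finsupp.linearCombination ℝ (k m)

lemma kernelForm_apply_eq_sum (k : Matrix ι ι ℝ) {f g : ι →₀ ℝ} {s : Finset ι}
    (hf : f.support ⊆ s) (hg : g.support ⊆ s) :
    kernelForm k f g = ∑ m ∈ s, ∑ n ∈ s, k m n * f m * g n := by
  rw [kernelForm, Finsupp.linearCombination_apply, Finsupp.sum_of_support_subset f hf _ (by simp),
    LinearMap.sum_apply]
  refine Finset.sum_congr rfl fun m _ => ?_
  rw [LinearMap.smul_apply, Finsupp.linearCombination_apply,
    Finsupp.sum_of_support_subset g hg _ (by simp), smul_eq_mul, Finset.mul_sum]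
  refine Finset.sum_congr rfl fun n _ => ?_
  rw [smul_eq_mul]
  ring

lemma kernelForm_sub_diagonal [DecidableEq ι] (k : Matrix ι ι ℝ) (W : ι → ℝ) (f : ι →₀ ℝ) :
    kernelForm (k - Matrix.diagonal W) f f
      = kernelForm k f f - f.sum fun n x => W n * x ^ 2 := by
  simp only [kernelForm_apply_eq_sum _ subset_rfl subset_rfl, Matrix.sub_apply, sub_mul,
    Finset.sum_sub_distrib, Finsupp.sum, Matrix.diagonal_apply, ite_mul, zero_mul,
    Finset.sum_ite_eq]
  congr 1
  exact Finset.sum_congr rfl fun n hn => by rw [if_pos hn]; ring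

lemma kernelForm_parallelogram (k : Matrix ι ι ℝ) (f g : ι →₀ ℝ) :
    kernelForm k (f + g) (f + g) + kernelForm k (f - g) (f - g)
      = 2 * kernelForm k f f + 2 * kernelForm k g g := by
  simp only [map_add, map_sub, LinearMap.add_apply, LinearMap.sub_apply]
  ring

/-- Symmetric kernels with nonpositive off-diagonal entries: the kernels of Schrödinger operators on
weighted graphs. The diagonal is unrestricted. -/
structure IsSchrodingerKernel (k : Matrix ι ι ℝ) : Prop where
  symm : ∀ m n, k m n = k n m
  nonpos : ∀ m n, m ≠ n → k m n ≤ 0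

/-- `u` is superharmonic for `k` if every series `∑ₙ k m n u(n)` converges to a nonnegative
number. -/
def IsSuperharmonic (k : Matrix ι ι ℝ) (u : ι → ℝ) : Prop :=
  ∀ m, ∃ r, 0 ≤ r ∧ HasSum (fun n => k m n * u n) r

/-- A kernel is critical if its form dominates no nonzero nonnegative weight. -/
def IsCritical (k : Matrix ι ι ℝ) : Prop :=
  ∀ W : ι → ℝ, 0 ≤ W →
    (∀ f : ι →₀ ℝ, (f.sum fun n x => W n * x ^ 2) ≤ kernelForm k f f) → W = 0

variable {k : Matrix ι ι ℝ} {u : ι → ℝ}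

lemma IsSuperharmonic.sum_nonneg (hu : IsSuperharmonic k u) (hk : IsSchrodingerKernel k)
    (hpos : ∀ n, 0 < u n) {s : Finset ι} {m : ι} (hm : m ∈ s) :
    0 ≤ ∑ n ∈ s, k m n * u n := by
  obtain ⟨r, hr, hsum⟩ := hu m
  have hle : ∑ n ∈ s, -(k m n * u n) ≤ -r := by
    refine sum_le_hasSum s (fun n hn => ?_) hsum.neg
    have hmn : m ≠ n := fun h => hn (h ▸ hm)
    exact neg_nonneg.2 (mul_nonpos_of_nonpos_of_nonneg (hk.nonpos m n hmn) (hpos n).le)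
  rw [Finset.sum_neg_distrib] at hle
  linarith

lemma sum_sum_mul_eq_ground_state_representation (hsymm : ∀ m n, k m n = k n m) (u g : ι → ℝ)
    (s : Finset ι) :
    ∑ m ∈ s, ∑ n ∈ s, k m n * (u m * g m) * (u n * g n)
      = ∑ m ∈ s, u m * g m ^ 2 * ∑ n ∈ s, k m n * u n
        + 1 / 2 * ∑ m ∈ s, ∑ n ∈ s, -k m n * u m * u n * (g m - g n) ^ 2 := by
  have hswap : ∑ m ∈ s, ∑ n ∈ s, k m n * u m * u n * g n ^ 2
      = ∑ m ∈ s, ∑ n ∈ s, k m n * u m * u n * g m ^ 2 := by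
    rw [Finset.sum_comm]
    refine Finset.sum_congr rfl fun m _ => Finset.sum_congr rfl fun n _ => ?_
    rw [hsymm n m]
    ring
  have hsq : ∑ m ∈ s, ∑ n ∈ s, -k m n * u m * u n * (g m - g n) ^ 2
      = 2 * ∑ m ∈ s, ∑ n ∈ s, k m n * (u m * g m) * (u n * g n)
        - ∑ m ∈ s, ∑ n ∈ s, k m n * u m * u n * g m ^ 2
        - ∑ m ∈ s, ∑ n ∈ s, k m n * u m * u n * g n ^ 2 := by
    simp only [Finset.mul_sum, ← Finset.sum_sub_distrib]
    exact Finset.sum_congr rfl fun m _ => Finset.sum_congr rfl fun n _ => by ring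
  have hdiag : ∑ m ∈ s, u m * g m ^ 2 * ∑ n ∈ s, k m n * u n
      = ∑ m ∈ s, ∑ n ∈ s, k m n * u m * u n * g m ^ 2 := by
    simp only [Finset.mul_sum]
    exact Finset.sum_congr rfl fun m _ => Finset.sum_congr rfl fun n _ => by ring
  rw [hdiag, hsq, hswap]
  ring

lemma IsSuperharmonic.neg_mul_sq_sub_le_kernelForm (hu : IsSuperharmonic k u)
    (hk : IsSchrodingerKernel k) (hpos : ∀ n, 0 < u n) (f : ι →₀ ℝ) (a b : ι) :
    -k a b * u a * u b * (f a / u a - f b / u b) ^ 2 ≤ 2 * kernelForm k f f := by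
  classical
  set s : Finset ι := insert a (insert b f.support)
  set g : ι → ℝ := fun n => f n / u n
  have hsupp : f.support ⊆ s := fun n hn => by simp [s, Finsupp.mem_support_iff.1 hn]
  have hfg : ∀ n, u n * g n = f n := fun n => mul_div_cancel₀ (f n) (hpos n).ne'
  have hjump : ∀ m n, 0 ≤ -k m n * u m * u n * (g m - g n) ^ 2 := by
    intro m n
    rcases eq_or_ne m n with rfl | hmn
    · simp
    · have := neg_nonneg.2 (hk.nonpos m n hmn)
      have := hpos m
      have := hpos n
      positivity
  have hpotential : 0 ≤ ∑ m ∈ s, u m * g m ^ 2 * ∑ n ∈ s, k m n * u n :=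
    Finset.sum_nonneg fun m hm =>
      mul_nonneg (mul_nonneg (hpos m).le (sq_nonneg _)) (hu.sum_nonneg hk hpos hm)
  have hsingle : -k a b * u a * u b * (g a - g b) ^ 2
      ≤ ∑ m ∈ s, ∑ n ∈ s, -k m n * u m * u n * (g m - g n) ^ 2 :=
    calc -k a b * u a * u b * (g a - g b) ^ 2
        ≤ ∑ n ∈ s, -k a n * u a * u n * (g a - g n) ^ 2 :=
          Finset.single_le_sum (f := fun n => -k a n * u a * u n * (g a - g n) ^ 2)
            (fun n _ => hjump a n) (by simp [s])
      _ ≤ ∑ m ∈ s, ∑ n ∈ s, -k m n * u m * u n * (g m - g n) ^ 2 :=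
          Finset.single_le_sum (f := fun m => ∑ n ∈ s, -k m n * u m * u n * (g m - g n) ^ 2)
            (fun m _ => Finset.sum_nonneg fun n _ => hjump m n) (by simp [s])
  have hrepr := sum_sum_mul_eq_ground_state_representation hk.symm u g s
  simp only [hfg] at hrepr
  rw [kernelForm_apply_eq_sum k hsupp hsupp, hrepr]
  linarith

lemma IsSuperharmonic.kernelForm_self_nonneg (hu : IsSuperharmonic k u)
    (hk : IsSchrodingerKernel k) (hpos : ∀ n, 0 < u n) (f : ι →₀ ℝ) :
    0 ≤ kernelForm k f f := by
  rcases isEmpty_or_nonempty ι with hι | ⟨⟨a⟩⟩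
  · simp [Subsingleton.elim f 0]
  · simpa using hu.neg_mul_sq_sub_le_kernelForm hk hpos f a a

lemma IsCritical.exists_kernelForm_lt (hcrit : IsCritical k)
    (hnonneg : ∀ f, 0 ≤ kernelForm k f f) (o : ι) (c : ℝ) {ε : ℝ} (hε : 0 < ε) :
    ∃ f : ι →₀ ℝ, f o = c ∧ kernelForm k f f < ε := by
  classical
  by_contra! hlarge
  have hc : c ≠ 0 := fun hc => absurd (hlarge 0 (by simp [hc])) (by simpa using hε)
  set w : ι → ℝ := Pi.single o (ε / c ^ 2)
  have hW : ∀ f : ι →₀ ℝ, (f.sum fun n x => w n * x ^ 2) ≤ kernelForm k f f := by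
    intro f
    have hsum : (f.sum fun n x => w n * x ^ 2) = ε / c ^ 2 * f o ^ 2 := by
      rw [Finsupp.sum_of_support_subset f (Finset.subset_insert o _) _ (by simp)]
      simp [w, Pi.single_apply]
    rw [hsum]
    rcases eq_or_ne (f o) 0 with ho | ho
    · simpa [ho] using hnonneg f
    · have hscaled := hlarge ((c / f o) • f) (by simp [ho])
      simp only [map_smul, LinearMap.smul_apply, smul_eq_mul] at hscaled
      calc ε / c ^ 2 * f o ^ 2 ≤ c / f o * (c / f o * kernelForm k f f) / c ^ 2 * f o ^ 2 := by
            gcongr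
        _ = kernelForm k f f := by field_simp
  have hzero := hcrit w (Pi.single_nonneg.2 (by positivity)) hW
  have : ε / c ^ 2 = 0 := by simpa [w] using congrFun hzero o
  exact absurd this (by positivity)

-- Along an edge `k m n < 0` the ground state representation controls the jump of `f / u`.
lemma IsSuperharmonic.tendsto_of_kernelForm_tendsto_zero (hu : IsSuperharmonic k u)
    (hk : IsSchrodingerKernel k) (hpos : ∀ n, 0 < u n) {o : ι}
    (hconn : ∀ n, Relation.ReflTransGen (fun a b => k a b < 0) o n) {f : ℕ → ι →₀ ℝ}
    (hfo : ∀ j, f j o = u o) (hf : Tendsto (fun j => kernelForm k (f j) (f j)) atTop (nhds 0))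
    (n : ι) : Tendsto (fun j => f j n) atTop (nhds (u n)) := by
  suffices hratio : Tendsto (fun j => f j n / u n) atTop (nhds 1) by
    simpa [div_mul_cancel₀ _ (hpos n).ne'] using hratio.mul_const (u n)
  induction hconn n with
  | refl => simp [hfo, (hpos o).ne']
  | @tail a b _ hab ih =>
    set c := -k a b * u a * u b
    have hc : 0 < c := mul_pos (mul_pos (neg_pos.2 hab) (hpos a)) (hpos b)
    have hbound : Tendsto (fun j => 2 * kernelForm k (f j) (f j) / c) atTop (nhds 0) := by
      simpa using (hf.const_mul 2).div_const c
    have hsq : Tendsto (fun j => (f j a / u a - f j b / u b) ^ 2) atTop (nhds 0) :=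
      squeeze_zero (fun j => sq_nonneg _) (fun j => (le_div_iff₀' hc).2 <|
        hu.neg_mul_sq_sub_le_kernelForm hk hpos (f j) a b) hbound
    have hjump : Tendsto (fun j => f j a / u a - f j b / u b) atTop (nhds 0) :=
      (tendsto_zero_iff_abs_tendsto_zero _).2 <| by
        simpa [Function.comp_def, Real.sqrt_sq_eq_abs] using hsq.sqrt
    simpa using ih.sub hjump

lemma tendsto_kernelForm_filter_mem (k : Matrix ι ι ℝ) {f : ℕ → ι →₀ ℝ}
    (hf : ∀ n, Tendsto (fun j => f j n) atTop (nhds (u n))) (K : Finset ι)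
    [DecidablePred (· ∈ K)] :
    Tendsto (fun j => kernelForm k ((f j).filter (· ∈ K)) ((f j).filter (· ∈ K))) atTop
      (nhds (∑ m ∈ K, ∑ n ∈ K, k m n * u m * u n)) := by
  have hsupp : ∀ j, ((f j).filter (· ∈ K)).support ⊆ K := fun j n hn => by
    rw [Finsupp.support_filter, Finset.mem_filter] at hn
    exact hn.2
  simp only [kernelForm_apply_eq_sum k (hsupp _) (hsupp _)]
  refine tendsto_finsetSum K fun m hm => tendsto_finsetSum K fun n hn => ?_
  simpa only [Finsupp.filter_apply, hm, hn, if_true] using ((hf m).const_mul _).mul (hf n)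

-- Cutting `f` off on `K` costs, by the parallelogram law, at most the energy of the part on `K`.
lemma sum_mul_sq_le_of_hardy_off_finset [DecidableEq ι]
    (hnonneg : ∀ f, 0 ≤ kernelForm k f f) {K : Finset ι}
    {W : ι → ℝ} (hW : 0 ≤ W)
    (hhardy : ∀ φ : ι →₀ ℝ, (∀ n ∈ K, φ n = 0) →
      (φ.sum fun n x => W n * x ^ 2) ≤ kernelForm k φ φ) (f : ι →₀ ℝ) (F : Finset ι) :
    ∑ n ∈ F \ K, W n * f n ^ 2
      ≤ 2 * kernelForm k f f + 2 * kernelForm k (f.filter (· ∈ K)) (f.filter (· ∈ K)) := by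
  set ψ := f.filter (· ∈ K)
  have hvanish : ∀ n ∈ K, (f - ψ) n = 0 := fun n hn => by simp [ψ, hn]
  have hterm : ∀ n, 0 ≤ W n * (f - ψ) n ^ 2 := fun n => mul_nonneg (hW n) (sq_nonneg _)
  calc ∑ n ∈ F \ K, W n * f n ^ 2 = ∑ n ∈ F \ K, W n * (f - ψ) n ^ 2 := by
        refine Finset.sum_congr rfl fun n hn => ?_
        simp [ψ, (Finset.mem_sdiff.1 hn).2]
    _ ≤ ∑ n ∈ F ∪ (f - ψ).support, W n * (f - ψ) n ^ 2 :=
        Finset.sum_le_sum_of_subset_of_nonneg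
          (Finset.sdiff_subset.trans Finset.subset_union_left) fun n _ _ => hterm n
    _ = (f - ψ).sum fun n x => W n * x ^ 2 :=
        (Finsupp.sum_of_support_subset (f - ψ) (s := F ∪ (f - ψ).support)
          Finset.subset_union_right (fun n x => W n * x ^ 2) (by simp)).symm
    _ ≤ kernelForm k (f - ψ) (f - ψ) := hhardy _ hvanish
    _ ≤ 2 * kernelForm k f f + 2 * kernelForm k ψ ψ := by
        linarith [kernelForm_parallelogram k f ψ, hnonneg (f + ψ)]

theorem IsCritical.summable_mul_sq_of_hardy_off_finset (hcrit : IsCritical k)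
    (hu : IsSuperharmonic k u) (hk : IsSchrodingerKernel k) (hpos : ∀ n, 0 < u n) {o : ι}
    (hconn : ∀ n, Relation.ReflTransGen (fun a b => k a b < 0) o n) {K : Finset ι}
    {W : ι → ℝ} (hW : 0 ≤ W)
    (hhardy : ∀ φ : ι →₀ ℝ, (∀ n ∈ K, φ n = 0) →
      (φ.sum fun n x => W n * x ^ 2) ≤ kernelForm k φ φ) :
    Summable fun n => W n * u n ^ 2 := by
  classical
  have hnonneg := hu.kernelForm_self_nonneg hk hpos
  choose f hfo hf using fun j : ℕ =>
    hcrit.exists_kernelForm_lt hnonneg o (u o) (Nat.one_div_pos_of_nat (α := ℝ) (n := j))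
  have hnull : Tendsto (fun j => kernelForm k (f j) (f j)) atTop (nhds 0) :=
    squeeze_zero (fun j => hnonneg (f j)) (fun j => (hf j).le)
      tendsto_one_div_add_atTop_nhds_zero_nat
  have hlim := hu.tendsto_of_kernelForm_tendsto_zero hk hpos hconn hfo hnull
  have hbound : ∀ F : Finset ι, ∑ n ∈ F \ K, W n * u n ^ 2
      ≤ 2 * 0 + 2 * ∑ m ∈ K, ∑ n ∈ K, k m n * u m * u n := fun F =>
    le_of_tendsto_of_tendsto'
      (tendsto_finsetSum _ fun n _ => ((hlim n).pow 2).const_mul (W n))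
      ((hnull.const_mul 2).add ((tendsto_kernelForm_filter_mem k hlim K).const_mul 2))
      fun j => sum_mul_sq_le_of_hardy_off_finset hnonneg hW hhardy (f j) F
  have hterm : ∀ n, 0 ≤ W n * u n ^ 2 := fun n => mul_nonneg (hW n) (sq_nonneg _)
  refine summable_of_sum_le (c := 2 * 0 + 2 * ∑ m ∈ K, ∑ n ∈ K, k m n * u m * u n
    + ∑ n ∈ K, W n * u n ^ 2) hterm fun F => ?_
  calc ∑ n ∈ F, W n * u n ^ 2 ≤ ∑ n ∈ F \ K ∪ K, W n * u n ^ 2 :=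
        Finset.sum_le_sum_of_subset_of_nonneg (by grind) fun n _ _ => hterm n
    _ = ∑ n ∈ F \ K, W n * u n ^ 2 + ∑ n ∈ K, W n * u n ^ 2 :=
        Finset.sum_union Finset.sdiff_disjoint
    _ ≤ _ := by gcongr; exact hbound F

end KernelForm

section FractionalLaplacianKernel

/-- The coefficients of the Fourier cosine series
`(2 - 2 cos θ) ^ σ = c₀ + 2 ∑ₖ cₖ cos (k θ)`, from which `Kker σ` is built. -/
noncomputable def fracCoeff (σ : ℝ) (k : ℕ) : ℝ := (-1) ^ k * rbinom (2 * σ) (σ + k)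

lemma rbinom_two_mul_add (σ x : ℝ) : rbinom (2 * σ) (σ + x) = rbinom (2 * σ) (σ - x) := by
  unfold rbinom
  rw [mul_comm (Gamma (σ + x + 1))]
  congr 3 <;> ring_nf

lemma Kker_comm (σ : ℝ) (m n : ℕ) : Kker σ m n = Kker σ n m := by
  rw [Kker, Kker, add_comm m n, add_sub_assoc, rbinom_two_mul_add, ← sub_add, sub_add_eq_add_sub,
    add_right_comm σ]

lemma Kker_eq_fracCoeff_sub (σ : ℝ) (m n : ℕ) :
    Kker σ m n = fracCoeff σ ((m : ℤ) - n).natAbs - fracCoeff σ (m + n) := by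
  wlog hnm : n ≤ m generalizing m n
  · rw [Kker_comm, this n m (le_of_not_ge hnm), add_comm n m, ← Int.natAbs_neg, neg_sub]
  obtain ⟨d, rfl⟩ := Nat.exists_eq_add_of_le hnm
  have hdist : (((n + d : ℕ) : ℤ) - n).natAbs = d := by omega
  have hparity : (-1 : ℝ) ^ (n + d + n) = (-1) ^ d := by
    rw [add_right_comm, pow_add, Even.neg_one_pow ⟨n, rfl⟩, one_mul]
  simp only [Kker, fracCoeff, hdist, hparity, mul_sub]
  push_cast
  congr 3 <;> ring

variable {σ : ℝ}

lemma fracCoeff_succ_mul (hσ : 0 < σ) (k : ℕ) :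
    (k + 1 + σ) * fracCoeff σ (k + 1) = (k - σ) * fracCoeff σ k := by
  have hnum : Gamma (σ + (k + 1 : ℕ) + 1) = (σ + k + 1) * Gamma (σ + k + 1) := by
    rw [← Gamma_add_one (by positivity)]
    push_cast
    congr 1
    ring
  have hΓ : Gamma (σ + k + 1) ≠ 0 := (Gamma_pos_of_pos (by positivity)).ne'
  have harg : 2 * σ - (σ + (k + 1 : ℕ)) + 1 = σ - k := by push_cast; ring
  have harg' : 2 * σ - (σ + k) + 1 = σ - k + 1 := by ring
  rw [fracCoeff, fracCoeff, rbinom, rbinom, hnum, harg, harg', pow_succ]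
  rcases eq_or_ne (σ - k) 0 with hk | hk
  · rw [hk, ← neg_sub σ, hk]
    simp
  · rw [Gamma_add_one hk]
    rcases eq_or_ne (Gamma (σ - k)) 0 with hΓ' | hΓ'
    · simp [hΓ']
    · field_simp
      ring

lemma mul_fracCoeff_succ_sub (hσ : 0 < σ) (k : ℕ) :
    (k + 1 + σ) * (fracCoeff σ (k + 1) - fracCoeff σ k) = (1 + 2 * σ) * -fracCoeff σ k := by
  linear_combination fracCoeff_succ_mul hσ k

lemma fracCoeff_zero_pos (hσ : 0 < σ) : 0 < fracCoeff σ 0 := by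
  rw [fracCoeff, rbinom, pow_zero, one_mul, Nat.cast_zero]
  have := Gamma_pos_of_pos (show 0 < 2 * σ + 1 by linarith)
  have := Gamma_pos_of_pos (show 0 < σ + 0 + 1 by linarith)
  have := Gamma_pos_of_pos (show 0 < 2 * σ - (σ + 0) + 1 by linarith)
  positivity

lemma fracCoeff_one_neg (hσ : 0 < σ) : fracCoeff σ 1 < 0 := by
  have hrec := fracCoeff_succ_mul hσ 0
  simp only [Nat.cast_zero, zero_add, zero_sub] at hrec
  refine neg_of_mul_neg_right (a := 1 + σ) ?_ (by positivity)
  rw [hrec]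
  exact mul_neg_of_neg_of_pos (neg_lt_zero.2 hσ) (fracCoeff_zero_pos hσ)

lemma fracCoeff_nonpos (hσ : 0 < σ) (hσ1 : σ ≤ 1) {k : ℕ} (hk : 1 ≤ k) : fracCoeff σ k ≤ 0 := by
  induction k, hk using Nat.le_induction with
  | base => exact (fracCoeff_one_neg hσ).le
  | succ k hk ih =>
    have hσk : σ ≤ k := hσ1.trans (by exact_mod_cast hk)
    refine nonpos_of_mul_nonpos_right (a := k + 1 + σ) ?_ (by positivity)
    rw [fracCoeff_succ_mul hσ]
    exact mul_nonpos_of_nonneg_of_nonpos (sub_nonneg.2 hσk) ih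

lemma fracCoeff_lt_succ (hσ : 0 < σ) {k : ℕ} (hk : fracCoeff σ k < 0) :
    fracCoeff σ k < fracCoeff σ (k + 1) := by
  refine sub_pos.1 (pos_of_mul_pos_right (a := k + 1 + σ) ?_ (by positivity))
  rw [mul_fracCoeff_succ_sub hσ]
  exact mul_pos (by positivity) (neg_pos.2 hk)

lemma fracCoeff_le_succ (hσ : 0 < σ) (hσ1 : σ ≤ 1) {k : ℕ} (hk : 1 ≤ k) :
    fracCoeff σ k ≤ fracCoeff σ (k + 1) := by
  refine sub_nonneg.1 (nonneg_of_mul_nonneg_right (a := k + 1 + σ) ?_ (by positivity))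
  rw [mul_fracCoeff_succ_sub hσ]
  exact mul_nonneg (by positivity) (neg_nonneg.2 (fracCoeff_nonpos hσ hσ1 hk))

lemma fracCoeff_mono (hσ : 0 < σ) (hσ1 : σ ≤ 1) {k l : ℕ} (hk : 1 ≤ k) (hkl : k ≤ l) :
    fracCoeff σ k ≤ fracCoeff σ l := by
  induction l, hkl using Nat.le_induction with
  | base => exact le_rfl
  | succ l hl ih => exact ih.trans (fracCoeff_le_succ hσ hσ1 (hk.trans hl))

lemma Kker_nonpos (hσ : 0 < σ) (hσ1 : σ ≤ 1) {m n : ℕ} (hmn : m ≠ n) : Kker σ m n ≤ 0 := by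
  rw [Kker_eq_fracCoeff_sub]
  exact sub_nonpos.2 (fracCoeff_mono hσ hσ1 (by omega) (by omega))

lemma Kker_succ_neg (hσ : 0 < σ) (hσ1 : σ ≤ 1) {m : ℕ} (hm : 1 ≤ m) : Kker σ m (m + 1) < 0 := by
  have hdist : ((m : ℤ) - (m + 1 : ℕ)).natAbs = 1 := by omega
  rw [Kker_eq_fracCoeff_sub, hdist, sub_neg]
  calc fracCoeff σ 1 < fracCoeff σ 2 := fracCoeff_lt_succ hσ (fracCoeff_one_neg hσ)
    _ ≤ fracCoeff σ (m + (m + 1)) := fracCoeff_mono hσ hσ1 one_le_two (by omega)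

lemma two_mul_sum_range_fracCoeff (hσ : 0 < σ) (N : ℕ) :
    2 * σ * ∑ k ∈ Finset.range N, fracCoeff σ k
      = σ * fracCoeff σ 0 - (N + σ) * fracCoeff σ N := by
  induction N with
  | zero => simp
  | succ N ih =>
    rw [Finset.sum_range_succ]
    push_cast
    linear_combination ih + fracCoeff_succ_mul hσ N

lemma summable_fracCoeff (hσ : 0 < σ) (hσ1 : σ ≤ 1) : Summable (fracCoeff σ) := by
  rw [← summable_nat_add_iff 1, ← summable_neg_iff]
  have hnonneg : ∀ k : ℕ, 0 ≤ -fracCoeff σ (k + 1) := fun k =>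
    neg_nonneg.2 (fracCoeff_nonpos hσ hσ1 k.succ_pos)
  refine summable_of_sum_range_le (c := fracCoeff σ 0 / 2) hnonneg fun N => ?_
  have htele := two_mul_sum_range_fracCoeff hσ (N + 1)
  rw [Finset.sum_range_succ'] at htele
  have hlast : 0 ≤ ((N + 1 : ℕ) + σ) * -fracCoeff σ (N + 1) :=
    mul_nonneg (by positivity) (hnonneg N)
  rw [Finset.sum_neg_distrib]
  refine le_of_mul_le_mul_left ?_ (mul_pos two_pos hσ)
  linarith

lemma mul_fracCoeff_add_sub_le (hσ : 0 < σ) (hσ1 : σ ≤ 1) {k : ℕ} (hk : 1 ≤ k) (j : ℕ) :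
    k * (fracCoeff σ (k + j) - fracCoeff σ k) ≤ (1 + 2 * σ) * j * -fracCoeff σ k := by
  induction j with
  | zero => simp
  | succ j ih =>
    have hstep : k * (fracCoeff σ (k + j + 1) - fracCoeff σ (k + j))
        ≤ (1 + 2 * σ) * -fracCoeff σ k :=
      calc k * (fracCoeff σ (k + j + 1) - fracCoeff σ (k + j))
          ≤ ((k + j : ℕ) + 1 + σ) * (fracCoeff σ (k + j + 1) - fracCoeff σ (k + j)) := by
            refine mul_le_mul_of_nonneg_right ?_
              (sub_nonneg.2 (fracCoeff_le_succ hσ hσ1 (by omega)))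
            push_cast
            linarith [j.cast_nonneg (α := ℝ)]
        _ = (1 + 2 * σ) * -fracCoeff σ (k + j) := mul_fracCoeff_succ_sub hσ (k + j)
        _ ≤ (1 + 2 * σ) * -fracCoeff σ k := by
            gcongr
            exact fracCoeff_mono hσ hσ1 hk (by omega)
    rw [← add_assoc]
    push_cast
    linarith

lemma summable_abs_Kker_mul (hσ : 0 < σ) (hσ1 : σ ≤ 1) (m : ℕ) :
    Summable fun n : ℕ => |Kker σ m n| * n := by
  rw [← summable_nat_add_iff (m + 1)]
  have hdom : Summable fun n : ℕ => ((1 + 2 * σ) * (2 * m) + m) * -fracCoeff σ (n + 1) :=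
    ((summable_nat_add_iff 1).2 (summable_fracCoeff hσ hσ1)).neg.mul_left _
  refine hdom.of_nonneg_of_le (fun n => by positivity) fun n => ?_
  have hdist : ((m : ℤ) - (n + (m + 1) : ℕ)).natAbs = n + 1 := by omega
  have hsum : m + (n + (m + 1)) = n + 1 + 2 * m := by ring
  rw [abs_of_nonpos (Kker_nonpos hσ hσ1 (by omega)), Kker_eq_fracCoeff_sub, hdist, hsum, neg_sub]
  have hdiff := mul_fracCoeff_add_sub_le hσ hσ1 n.succ_pos (2 * m)
  have hfar : m * fracCoeff σ (n + 1 + 2 * m) ≤ 0 :=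
    mul_nonpos_of_nonneg_of_nonpos m.cast_nonneg (fracCoeff_nonpos hσ hσ1 (by omega))
  push_cast at hdiff ⊢
  linarith

end FractionalLaplacianKernel

section TrigonometricMoments

open MeasureTheory Set

lemma integral_rpow_mul_one_sub_rpow {a b : ℝ} (ha : 0 < a) (hb : 0 < b) :
    ∫ t in Ioo (0 : ℝ) 1, t ^ (a - 1) * (1 - t) ^ (b - 1) = Gamma a * Gamma b / Gamma (a + b) := by
  have hcpow : EqOn (fun t : ℝ => (t : ℂ) ^ ((a : ℂ) - 1) * (1 - (t : ℂ)) ^ ((b : ℂ) - 1))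
      (fun t : ℝ => ((t ^ (a - 1) * (1 - t) ^ (b - 1) : ℝ) : ℂ)) (Ioo 0 1) := by
    intro t ht
    simp only [Complex.ofReal_mul, Complex.ofReal_cpow ht.1.le,
      Complex.ofReal_cpow (sub_nonneg.2 ht.2.le), Complex.ofReal_sub, Complex.ofReal_one]
  have hbeta := ProbabilityTheory.beta_eq_betaIntegralReal a b ha hb
  rw [ProbabilityTheory.beta] at hbeta
  rw [hbeta, Complex.betaIntegral, intervalIntegral.integral_of_le zero_le_one,
    integral_Ioc_eq_integral_Ioo, setIntegral_congr_fun measurableSet_Ioo hcpow,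
    integral_complex_ofReal, Complex.ofReal_re]

lemma image_one_sub_cos_div_two_Ioo : (fun θ => (1 - cos θ) / 2) '' Ioo 0 π = Ioo 0 1 := by
  ext t
  constructor
  · rintro ⟨θ, hθ, rfl⟩
    have := mapsTo_cos_Ioo hθ
    constructor <;> linarith [this.1, this.2]
  · rintro ⟨ht0, ht1⟩
    have hcos : 1 - 2 * t ∈ cos '' Ioo 0 π := by
      rw [show cos '' Ioo 0 π = Ioo (-1) 1 from cosPartialHomeomorph.image_source_eq_target]
      constructor <;> linarith
    obtain ⟨θ, hθ, hcosθ⟩ := hcos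
    exact ⟨θ, hθ, by simp only [hcosθ]; ring⟩

lemma sin_div_two_eq_rpow_mul_rpow {θ : ℝ} (hθ : θ ∈ Ioo 0 π) :
    sin θ / 2 = ((1 - cos θ) / 2) ^ (1 / 2 : ℝ) * ((1 + cos θ) / 2) ^ (1 / 2 : ℝ) := by
  rw [← sqrt_eq_rpow, ← sqrt_eq_rpow, ← sin_half_eq_sqrt hθ.1.le (by linarith [hθ.2, pi_pos]),
    ← cos_half (by linarith [hθ.1, pi_pos]) hθ.2.le]
  rw [show sin θ = sin (2 * (θ / 2)) by ring_nf, sin_two_mul]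
  ring

lemma integral_half_angle_rpow {p q : ℝ} (hp : -(1 / 2) < p) (hq : -(1 / 2) < q) :
    ∫ θ in Ioo 0 π, ((1 - cos θ) / 2) ^ p * ((1 + cos θ) / 2) ^ q
      = Gamma (p + 1 / 2) * Gamma (q + 1 / 2) / Gamma (p + q + 1) := by
  have hderiv : ∀ θ ∈ Ioo 0 π,
      HasDerivWithinAt (fun θ => (1 - cos θ) / 2) (sin θ / 2) (Ioo 0 π) θ := fun θ _ => by
    simpa using (((hasDerivAt_cos θ).const_sub 1).div_const 2).hasDerivWithinAt
  have hinj : InjOn (fun θ => (1 - cos θ) / 2) (Ioo 0 π) := fun x hx y hy hxy =>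
    injOn_cos (Ioo_subset_Icc_self hx) (Ioo_subset_Icc_self hy) (by simp only at hxy; linarith)
  have hbeta := integral_rpow_mul_one_sub_rpow (neg_lt_iff_pos_add.1 hp) (neg_lt_iff_pos_add.1 hq)
  rw [← image_one_sub_cos_div_two_Ioo,
    integral_image_eq_integral_abs_deriv_smul measurableSet_Ioo hderiv hinj] at hbeta
  rw [show p + q + 1 = p + 1 / 2 + (q + 1 / 2) by ring, ← hbeta]
  refine setIntegral_congr_fun measurableSet_Ioo fun θ hθ => ?_
  have hcos := mapsTo_cos_Ioo hθ
  have hsin : 0 < sin θ := sin_pos_of_mem_Ioo hθ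
  have h1 : 0 < (1 - cos θ) / 2 := by linarith [hcos.2]
  have h2 : 0 < (1 + cos θ) / 2 := by linarith [hcos.1]
  have h1' : 1 - (1 - cos θ) / 2 = (1 + cos θ) / 2 := by ring
  simp only [smul_eq_mul, h1']
  rw [abs_of_pos (half_pos hsin), sin_div_two_eq_rpow_mul_rpow hθ, mul_mul_mul_comm,
    ← rpow_add h1, ← rpow_add h2]
  congr 2 <;> ring

lemma two_sub_two_mul_cos_rpow (p θ : ℝ) :
    (2 - 2 * cos θ) ^ p = 4 ^ p * ((1 - cos θ) / 2) ^ p := by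
  rw [← mul_rpow (by norm_num) (by linarith [cos_le_one θ])]
  congr 1
  ring

lemma integral_two_sub_two_mul_cos_rpow {s : ℝ} (hs : 0 < s) :
    ∫ θ in Ioo 0 π, (2 - 2 * cos θ) ^ s = π * fracCoeff s 0 := by
  have hbeta := integral_half_angle_rpow (p := s) (q := 0) (by linarith) (by norm_num)
  simp only [rpow_zero, mul_one, zero_add, add_zero, Gamma_one_half_eq] at hbeta
  have hdup := Gamma_mul_Gamma_add_half (s + 1 / 2)
  rw [show s + 1 / 2 + 1 / 2 = s + 1 by ring, show 2 * (s + 1 / 2) = 2 * s + 1 by ring,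
    show 1 - (2 * s + 1) = -(2 * s) by ring, rpow_neg two_pos.le, rpow_mul two_pos.le,
    show (2 : ℝ) ^ (2 : ℝ) = 4 by norm_num] at hdup
  have hΓ : Gamma (s + 1) ≠ 0 := (Gamma_pos_of_pos (by linarith)).ne'
  have h4 : (4 : ℝ) ^ s ≠ 0 := by positivity
  simp only [two_sub_two_mul_cos_rpow, integral_const_mul, hbeta, fracCoeff, rbinom, pow_zero,
    one_mul, Nat.cast_zero, add_zero, show 2 * s - s + 1 = s + 1 by ring]
  field_simp at hdup ⊢
  linear_combination √π * hdup + Gamma (s * 2 + 1) * sq_sqrt pi_pos.le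

lemma cos_add_cos_mul_two_sub_two_mul_cos (n : ℕ) (θ : ℝ) :
    (cos ((n + 1 : ℕ) * θ) + cos (n * θ)) * (2 - 2 * cos θ)
      = 2 * sin θ * (sin ((n + 1 : ℕ) * θ) - sin (n * θ)) := by
  rw [Nat.cast_add_one, add_one_mul, cos_add, sin_add]
  linear_combination -2 * cos (n * θ) * sin_sq_add_cos_sq θ

lemma continuous_two_sub_two_mul_cos_rpow {p : ℝ} (hp : 0 ≤ p) :
    Continuous fun θ : ℝ => (2 - 2 * cos θ) ^ p :=
  Continuous.rpow_const (by fun_prop) fun _ => Or.inr hp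

lemma hasDerivAt_two_sub_two_mul_cos_rpow_mul_sin (p : ℝ) (n : ℕ) {θ : ℝ} (hθ : θ ∈ Ioo 0 π) :
    HasDerivAt (fun θ => (2 - 2 * cos θ) ^ p * sin (n * θ))
      ((2 - 2 * cos θ) ^ (p - 1) *
        (2 * p * sin θ * sin (n * θ) + n * (2 - 2 * cos θ) * cos (n * θ))) θ := by
  have hpos : 0 < 2 - 2 * cos θ := by linarith [(mapsTo_cos_Ioo hθ).2]
  have hbase : HasDerivAt (fun θ => 2 - 2 * cos θ) (2 * sin θ) θ := by
    simpa using ((hasDerivAt_cos θ).const_mul 2).const_sub 2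
  have hsin : HasDerivAt (fun θ => sin (n * θ)) (cos (n * θ) * n) θ := by
    simpa using ((hasDerivAt_id θ).const_mul (n : ℝ)).sin
  convert! (hbase.rpow_const (p := p) (Or.inl hpos.ne')).mul hsin using 1
  rw [show (2 - 2 * cos θ) ^ p = (2 - 2 * cos θ) ^ (p - 1) * (2 - 2 * cos θ) by
    rw [← rpow_add_one hpos.ne', sub_add_cancel]]
  ring

theorem integral_two_sub_two_mul_cos_rpow_mul_cos {s : ℝ} (hs : 0 < s) (n : ℕ) :
    ∫ θ in 0..π, (2 - 2 * cos θ) ^ s * cos (n * θ) = π * fracCoeff s n := by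
  induction n with
  | zero =>
    simp only [Nat.cast_zero, zero_mul, cos_zero, mul_one]
    rw [intervalIntegral.integral_of_le pi_pos.le, integral_Ioc_eq_integral_Ioo,
      integral_two_sub_two_mul_cos_rpow hs]
  | succ n ih =>
    have hcont := continuous_two_sub_two_mul_cos_rpow hs.le
    have hint : ∀ (c : ℝ) (m : ℕ), IntervalIntegrable
        (fun θ => c * ((2 - 2 * cos θ) ^ s * cos (m * θ))) volume 0 π := fun c m =>
      Continuous.intervalIntegrable (by fun_prop) _ _
    have hderiv : ∀ θ ∈ Ioo 0 π, HasDerivAt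
        (fun θ => (2 - 2 * cos θ) ^ s * sin ((n + 1 : ℕ) * θ) - (2 - 2 * cos θ) ^ s * sin (n * θ))
        ((n + 1 + s) * ((2 - 2 * cos θ) ^ s * cos ((n + 1 : ℕ) * θ))
          - (n - s) * ((2 - 2 * cos θ) ^ s * cos (n * θ))) θ := by
      intro θ hθ
      have hpos : 0 < 2 - 2 * cos θ := by linarith [(mapsTo_cos_Ioo hθ).2]
      convert! (hasDerivAt_two_sub_two_mul_cos_rpow_mul_sin s (n + 1) hθ).sub
        (hasDerivAt_two_sub_two_mul_cos_rpow_mul_sin s n hθ) using 1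
      rw [show (2 - 2 * cos θ) ^ s = (2 - 2 * cos θ) ^ (s - 1) * (2 - 2 * cos θ) by
        rw [← rpow_add_one hpos.ne', sub_add_cancel]]
      have htrig := cos_add_cos_mul_two_sub_two_mul_cos n θ
      push_cast at htrig ⊢
      linear_combination (2 - 2 * cos θ) ^ (s - 1) * s * htrig
    have hFTC := intervalIntegral.integral_eq_sub_of_hasDerivAt_of_le pi_pos.le
      (Continuous.continuousOn (by fun_prop)) hderiv ((hint _ _).sub (hint _ _))
    rw [intervalIntegral.integral_sub (hint _ _) (hint _ _), intervalIntegral.integral_const_mul,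
      intervalIntegral.integral_const_mul, ih] at hFTC
    simp only [sin_nat_mul_pi, mul_zero, sin_zero, sub_self] at hFTC
    refine mul_left_cancel₀ (show (n + 1 + s : ℝ) ≠ 0 by positivity) ?_
    linear_combination hFTC - π * fracCoeff_succ_mul hs n

lemma abs_sin_nat_mul_le (n : ℕ) (θ : ℝ) : |sin (n * θ)| ≤ n * |sin θ| := by
  induction n with
  | zero => simp
  | succ n ih =>
    rw [Nat.cast_add_one, add_one_mul, sin_add]
    calc |sin (n * θ) * cos θ + cos (n * θ) * sin θ|
        ≤ |sin (n * θ)| * |cos θ| + |cos (n * θ)| * |sin θ| := by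
          rw [← abs_mul, ← abs_mul]
          exact abs_add_le _ _
      _ ≤ |sin (n * θ)| * 1 + 1 * |sin θ| := by gcongr <;> exact abs_cos_le_one _
      _ ≤ (n + 1) * |sin θ| := by linarith

/-- The integral of `(2 - 2 cos θ) ^ s * sin θ * sin (n θ)` over `(0, π)`. For `s = -α` it is,
up to normalization, the Riesz potential `I_α(n)`. -/
noncomputable def sineMoment (s : ℝ) (n : ℕ) : ℝ :=
  ∫ θ in Ioo 0 π, (2 - 2 * cos θ) ^ s * sin θ * sin (n * θ)

lemma sineMoment_one {s : ℝ} (hs : -(3 / 2) < s) :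
    sineMoment s 1 = 4 ^ (s + 1) * (Gamma (s + 3 / 2) * Gamma (3 / 2) / Gamma (s + 3)) := by
  have hbeta := integral_half_angle_rpow (p := s + 1) (q := 1) (by linarith) (by norm_num)
  rw [show s + 1 + 1 / 2 = s + 3 / 2 by ring, show (1 : ℝ) + 1 / 2 = 3 / 2 by norm_num,
    show s + 1 + 1 + 1 = s + 3 by ring] at hbeta
  rw [sineMoment, ← hbeta, ← integral_const_mul]
  refine setIntegral_congr_fun measurableSet_Ioo fun θ hθ => ?_
  have hpos : 0 < (1 - cos θ) / 2 := by linarith [(mapsTo_cos_Ioo hθ).2]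
  simp only [two_sub_two_mul_cos_rpow, rpow_add_one (four_ne_zero' ℝ), rpow_add_one hpos.ne',
    rpow_one, Nat.cast_one, one_mul]
  linear_combination 4 ^ s * ((1 - cos θ) / 2) ^ s * sin_sq θ

lemma integrableOn_two_sub_two_mul_cos_rpow_mul_sin_sq {s : ℝ} (hs : -(3 / 2) < s) :
    IntegrableOn (fun θ => (2 - 2 * cos θ) ^ s * sin θ ^ 2) (Ioo 0 π) := by
  refine Integrable.of_integral_ne_zero ?_
  have hmoment := sineMoment_one hs
  simp only [sineMoment, Nat.cast_one, one_mul, mul_assoc, ← sq] at hmoment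
  rw [hmoment]
  have := Gamma_pos_of_pos (show 0 < s + 3 / 2 by linarith)
  have := Gamma_pos_of_pos (show (0 : ℝ) < 3 / 2 by norm_num)
  have := Gamma_pos_of_pos (show 0 < s + 3 by linarith)
  positivity

lemma abs_two_sub_two_mul_cos_rpow_mul_sin_mul_sin_le (s : ℝ) (n : ℕ) (θ : ℝ) :
    |(2 - 2 * cos θ) ^ s * sin θ * sin (n * θ)| ≤ n * ((2 - 2 * cos θ) ^ s * sin θ ^ 2) := by
  have hw : 0 ≤ (2 - 2 * cos θ) ^ s := rpow_nonneg (by linarith [cos_le_one θ]) s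
  rw [abs_mul, abs_mul, abs_of_nonneg hw, ← sq_abs (sin θ)]
  calc (2 - 2 * cos θ) ^ s * |sin θ| * |sin (n * θ)|
      ≤ (2 - 2 * cos θ) ^ s * |sin θ| * (n * |sin θ|) := by
        gcongr
        exact abs_sin_nat_mul_le n θ
    _ = n * ((2 - 2 * cos θ) ^ s * |sin θ| ^ 2) := by ring

lemma integrableOn_two_sub_two_mul_cos_rpow_mul_sin_mul_sin {s : ℝ} (hs : -(3 / 2) < s) (n : ℕ) :
    IntegrableOn (fun θ => (2 - 2 * cos θ) ^ s * sin θ * sin (n * θ)) (Ioo 0 π) :=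
  ((integrableOn_two_sub_two_mul_cos_rpow_mul_sin_sq hs).const_mul n).mono'
    (by fun_prop : Measurable _).aestronglyMeasurable
    (Eventually.of_forall fun θ => abs_two_sub_two_mul_cos_rpow_mul_sin_mul_sin_le s n θ)

lemma tendsto_two_sub_two_mul_cos_rpow_mul_sin_nhdsGT_zero {p : ℝ} (hp : -(1 / 2) < p) (n : ℕ) :
    Tendsto (fun θ => (2 - 2 * cos θ) ^ p * sin (n * θ)) (nhdsWithin 0 (Ioi 0)) (nhds 0) := by
  have hlim : Tendsto (fun θ => n * (2 - 2 * cos θ) ^ (p + 1 / 2)) (nhdsWithin 0 (Ioi 0))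
      (nhds 0) := by
    have hcont : Continuous fun θ : ℝ => n * (2 - 2 * cos θ) ^ (p + 1 / 2) :=
      (continuous_two_sub_two_mul_cos_rpow (by linarith)).const_mul (n : ℝ)
    have hne : p + 1 / 2 ≠ 0 := by linarith
    simpa only [cos_zero, mul_one, sub_self, zero_rpow hne, mul_zero] using
      (hcont.tendsto 0).mono_left nhdsWithin_le_nhds
  refine squeeze_zero_norm' ?_ hlim
  filter_upwards [Ioo_mem_nhdsGT pi_pos] with θ hθ
  have hpos : 0 < 2 - 2 * cos θ := by linarith [(mapsTo_cos_Ioo hθ).2]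
  have hsin : |sin θ| ≤ (2 - 2 * cos θ) ^ (1 / 2 : ℝ) := by
    rw [← sqrt_eq_rpow]
    refine abs_le_sqrt ?_
    nlinarith [sin_sq_add_cos_sq θ, sq_nonneg (1 - cos θ)]
  rw [norm_mul, norm_of_nonneg (rpow_nonneg hpos.le p), norm_eq_abs, rpow_add hpos]
  calc (2 - 2 * cos θ) ^ p * |sin (n * θ)|
      ≤ (2 - 2 * cos θ) ^ p * (n * (2 - 2 * cos θ) ^ (1 / 2 : ℝ)) := by
        gcongr
        exact (abs_sin_nat_mul_le n θ).trans (by gcongr)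
    _ = n * ((2 - 2 * cos θ) ^ p * (2 - 2 * cos θ) ^ (1 / 2 : ℝ)) := by ring

lemma tendsto_two_sub_two_mul_cos_rpow_mul_sin_nhdsLT_pi (p : ℝ) (n : ℕ) :
    Tendsto (fun θ => (2 - 2 * cos θ) ^ p * sin (n * θ)) (nhdsWithin π (Iio π)) (nhds 0) := by
  have hcont : ContinuousAt (fun θ => (2 - 2 * cos θ) ^ p * sin (n * θ)) π :=
    (ContinuousAt.rpow_const (by fun_prop) (Or.inl (by norm_num))).mul (by fun_prop)
  simpa using hcont.tendsto.mono_left nhdsWithin_le_nhds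

lemma mul_sineMoment_succ {s : ℝ} (hs : -(3 / 2) < s) (n : ℕ) :
    n * (n + 2 + s) * sineMoment s (n + 1) = (n + 1) * (n - 1 - s) * sineMoment s n := by
  have hint : ∀ (c : ℝ) (m : ℕ), IntervalIntegrable
      (fun θ => c * ((2 - 2 * cos θ) ^ s * sin θ * sin (m * θ))) volume 0 π := fun c m =>
    ((intervalIntegrable_iff_integrableOn_Ioo_of_le pi_pos.le).2
      (integrableOn_two_sub_two_mul_cos_rpow_mul_sin_mul_sin hs m)).const_mul c
  have hderiv : ∀ θ ∈ Ioo 0 π, HasDerivAt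
      (fun θ => n * ((2 - 2 * cos θ) ^ (s + 1) * sin ((n + 1 : ℕ) * θ))
        + (n + 1) * ((2 - 2 * cos θ) ^ (s + 1) * sin (n * θ)))
      (2 * (n * (n + 2 + s)) * ((2 - 2 * cos θ) ^ s * sin θ * sin ((n + 1 : ℕ) * θ))
        - 2 * ((n + 1) * (n - 1 - s)) * ((2 - 2 * cos θ) ^ s * sin θ * sin (n * θ))) θ := by
    intro θ hθ
    convert! ((hasDerivAt_two_sub_two_mul_cos_rpow_mul_sin (s + 1) (n + 1) hθ).const_mul
      (n : ℝ)).add ((hasDerivAt_two_sub_two_mul_cos_rpow_mul_sin (s + 1) n hθ).const_mul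
      (n + 1 : ℝ)) using 1
    rw [add_sub_cancel_right]
    have htrig := cos_add_cos_mul_two_sub_two_mul_cos n θ
    push_cast at htrig ⊢
    linear_combination -(2 - 2 * cos θ) ^ s * n * (n + 1) * htrig
  have hp : -(1 / 2) < s + 1 := by linarith
  have hzero := ((tendsto_two_sub_two_mul_cos_rpow_mul_sin_nhdsGT_zero hp (n + 1)).const_mul
    (n : ℝ)).add ((tendsto_two_sub_two_mul_cos_rpow_mul_sin_nhdsGT_zero hp n).const_mul
    (n + 1 : ℝ))
  have hpi := ((tendsto_two_sub_two_mul_cos_rpow_mul_sin_nhdsLT_pi (s + 1) (n + 1)).const_mul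
    (n : ℝ)).add ((tendsto_two_sub_two_mul_cos_rpow_mul_sin_nhdsLT_pi (s + 1) n).const_mul
    (n + 1 : ℝ))
  have hFTC := intervalIntegral.integral_eq_sub_of_hasDerivAt_of_tendsto pi_pos hderiv
    ((hint _ _).sub (hint _ _)) hzero hpi
  rw [intervalIntegral.integral_sub (hint _ _) (hint _ _), intervalIntegral.integral_const_mul,
    intervalIntegral.integral_const_mul] at hFTC
  simp only [intervalIntegral.integral_of_le pi_pos.le, integral_Ioc_eq_integral_Ioo, mul_zero,
    add_zero, sub_self] at hFTC
  unfold sineMoment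
  linarith

end TrigonometricMoments

section FourierSeries

open MeasureTheory Set

lemma intervalIntegral_exp_mul_of_even {f : ℝ → ℝ} (hf : Continuous f) (heven : f.Even)
    (t b : ℝ) :
    ∫ y in -b..b, Complex.exp (Complex.I * (-t : ℝ) * y) * (f y : ℂ)
      = ((2 * ∫ y in 0..b, f y * cos (t * y) : ℝ) : ℂ) := by
  set g : ℝ → ℂ := fun y => Complex.exp (Complex.I * (-t : ℝ) * y) * (f y : ℂ)
  have hg : Continuous g := by fun_prop
  have hneg : ∀ y, g (-y) + g y = ((2 * (f y * cos (t * y)) : ℝ) : ℂ) := by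
    intro y
    simp only [g, heven y]
    push_cast
    have hcos := Complex.two_cos (t * y)
    rw [show Complex.I * -(t : ℂ) * -(y : ℂ) = t * y * Complex.I by ring,
      show Complex.I * -(t : ℂ) * (y : ℂ) = -(t * y) * Complex.I by ring]
    linear_combination -(f y : ℂ) * hcos
  calc ∫ y in -b..b, g y = (∫ y in -b..0, g y) + ∫ y in 0..b, g y :=
        (intervalIntegral.integral_add_adjacent_intervals (hg.intervalIntegrable _ _)
          (hg.intervalIntegrable _ _)).symm
    _ = ∫ y in 0..b, (g (-y) + g y) := by
        have hgneg : Continuous fun y => g (-y) := hg.comp continuous_neg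
        rw [intervalIntegral.integral_add (hgneg.intervalIntegrable _ _)
          (hg.intervalIntegrable _ _), intervalIntegral.integral_comp_neg, neg_zero]
    _ = ((2 * ∫ y in 0..b, f y * cos (t * y) : ℝ) : ℂ) := by
        simp_rw [hneg]
        rw [intervalIntegral.integral_ofReal, intervalIntegral.integral_const_mul]

lemma cos_natAbs_mul (k : ℤ) (x : ℝ) : cos (k.natAbs * x) = cos (k * x) := by
  rw [Nat.cast_natAbs, Int.cast_abs]
  rcases abs_choice (k : ℝ) with h | h <;> rw [h]
  rw [neg_mul, cos_neg]

lemma fourier_two_pi_coe_apply (k : ℤ) (x : ℝ) :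
    fourier k (x : AddCircle (2 * π)) = Complex.exp (Complex.I * (k : ℝ) * x) := by
  have hπ : (π : ℂ) ≠ 0 := by exact_mod_cast pi_ne_zero
  rw [fourier_coe_apply]
  congr 1
  push_cast
  field_simp

theorem hasSum_exp_of_integral_mul_cos {f : ℝ → ℝ} (hf : Continuous f) (heven : f.Even)
    (hper : Function.Periodic f (2 * π)) {a : ℕ → ℝ} (ha : Summable a)
    (hcoeff : ∀ n : ℕ, ∫ y in 0..π, f y * cos (n * y) = π * a n) (x : ℝ) :
    HasSum (fun k : ℤ => (a k.natAbs : ℂ) * Complex.exp (Complex.I * (k : ℝ) * x)) (f x) := by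
  have : Fact (0 < 2 * π) := ⟨two_pi_pos⟩
  have hperC : Function.Periodic (fun y => (f y : ℂ)) (2 * π) := fun y => by simp only [hper y]
  let F : C(AddCircle (2 * π), ℂ) :=
    ⟨hperC.lift, continuous_coinduced_dom.mpr (Complex.continuous_ofReal.comp hf)⟩
  have hF : ∀ y : ℝ, F y = f y := fun y => rfl
  have hfourier : fourierCoeff F = fun k : ℤ => (a k.natAbs : ℂ) := by
    funext k
    rw [fourierCoeff_eq_intervalIntegral F k (-π), show -π + 2 * π = π by ring]
    simp only [hF, fourier_two_pi_coe_apply, smul_eq_mul, Int.cast_neg]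
    rw [intervalIntegral_exp_mul_of_even hf heven]
    simp only [← cos_natAbs_mul, hcoeff, Complex.real_smul, ← Complex.ofReal_mul]
    congr 1
    field_simp
  have hsum : Summable (fourierCoeff F) := by
    have haC : Summable fun n => (a n : ℂ) := Complex.ofRealCLM.summable ha
    rw [hfourier]
    exact Summable.of_nat_of_neg (by simpa using haC) (by simpa using haC)
  simpa only [hfourier, fourier_two_pi_coe_apply, hF, smul_eq_mul] using
    has_pointwise_sum_fourier_series_of_summable hsum (x : AddCircle (2 * π))

-- Imaginary part of `exp (i m x)` times the cosine series, the terms `k - m` and `-k - m` paired.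
lemma hasSum_sub_mul_sin {a : ℕ → ℝ} {x y : ℝ}
    (h : HasSum (fun k : ℤ => (a k.natAbs : ℂ) * Complex.exp (Complex.I * (k : ℝ) * x)) y)
    (m : ℕ) :
    HasSum (fun n : ℕ => (a ((m : ℤ) - n).natAbs - a (m + n)) * sin (n * x))
      (y * sin (m * x)) := by
  have him : ∀ (r : ℝ) (k : ℤ), (Complex.exp ((m * x : ℝ) * Complex.I) *
      (r * Complex.exp (Complex.I * (k : ℝ) * x))).im = r * sin ((m + k : ℤ) * x) := by
    intro r k
    rw [mul_left_comm, ← Complex.exp_add, Complex.im_ofReal_mul,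
      ← Complex.exp_ofReal_mul_I_im]
    congr 3
    push_cast
    ring
  have hshift := Complex.hasSum_im (h.mul_left (Complex.exp ((m * x : ℝ) * Complex.I)))
  simp only [him] at hshift
  rw [mul_comm, Complex.im_ofReal_mul, Complex.exp_ofReal_mul_I_im] at hshift
  have hpair := ((Equiv.subRight (m : ℤ)).hasSum_iff.2 hshift).nat_add_neg
  simp only [Function.comp_def, Equiv.subRight_apply, add_sub_cancel, Int.cast_zero, zero_mul,
    sin_zero, mul_zero, add_zero] at hpair
  convert! hpair using 1
  funext n
  have hnear : ((n : ℤ) - m).natAbs = ((m : ℤ) - n).natAbs := by omega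
  have hfar : (-(n : ℤ) - m).natAbs = m + n := by omega
  rw [hnear, hfar]
  push_cast
  rw [neg_mul, sin_neg]
  ring

variable {σ : ℝ}

lemma hasSum_Kker_mul_sin (hσ : 0 < σ) (hσ1 : σ ≤ 1) (m : ℕ) (x : ℝ) :
    HasSum (fun n : ℕ => Kker σ m n * sin (n * x)) ((2 - 2 * cos x) ^ σ * sin (m * x)) := by
  simp only [Kker_eq_fracCoeff_sub]
  exact hasSum_sub_mul_sin (hasSum_exp_of_integral_mul_cos
    (continuous_two_sub_two_mul_cos_rpow hσ.le) (fun y => by simp only [cos_neg])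
    (fun y => by simp only [cos_add_two_pi]) (summable_fracCoeff hσ hσ1)
    (integral_two_sub_two_mul_cos_rpow_mul_cos hσ) x) m

theorem hasSum_Kker_mul_sineMoment (hσ : 0 < σ) (hσ1 : σ ≤ 1) {s : ℝ} (hs : -(3 / 2) < s)
    (m : ℕ) : HasSum (fun n => Kker σ m n * sineMoment s n) (sineMoment (s + σ) m) := by
  have hsum := summable_abs_Kker_mul hσ hσ1 m
  simp only [sineMoment, ← integral_const_mul]
  refine hasSum_integral_of_dominated_convergence
    (fun n θ => |Kker σ m n| * n * ((2 - 2 * cos θ) ^ s * sin θ ^ 2))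
    (fun n => (by fun_prop : Measurable _).aestronglyMeasurable)
    (fun n => Eventually.of_forall fun θ => ?_)
    (Eventually.of_forall fun θ => hsum.mul_right _) ?_ ?_
  · rw [norm_mul, norm_eq_abs, norm_eq_abs, mul_assoc |Kker σ m n|]
    gcongr
    exact abs_two_sub_two_mul_cos_rpow_mul_sin_mul_sin_le s n θ
  · simp only [tsum_mul_right]
    exact (integrableOn_two_sub_two_mul_cos_rpow_mul_sin_sq hs).const_mul _
  · filter_upwards [ae_restrict_mem measurableSet_Ioo] with θ hθ
    have hpos : 0 < 2 - 2 * cos θ := by linarith [(mapsTo_cos_Ioo hθ).2]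
    convert! (hasSum_Kker_mul_sin hσ hσ1 m θ).mul_left ((2 - 2 * cos θ) ^ s * sin θ) using 1
    · funext n
      ring
    · rw [rpow_add hpos]
      ring

end FourierSeries

section RieszPotential

variable {σ α : ℝ}

lemma Riesz_zero (α : ℝ) : Riesz α 0 = 0 := by
  simp [Riesz]

lemma Riesz_pos (hα : 0 < α) (hα' : α < 3 / 2) {n : ℕ} (hn : 1 ≤ n) : 0 < Riesz α n := by
  have hn' : (1 : ℝ) ≤ n := by exact_mod_cast hn
  have := Gamma_pos_of_pos (show 0 < 3 / 2 - α by linarith)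
  have := Gamma_pos_of_pos (show 0 < n + α - 1 by linarith)
  have := Gamma_pos_of_pos (show 0 < n - α + 2 by linarith)
  have := Gamma_pos_of_pos hα
  unfold Riesz
  positivity

lemma mul_Riesz_succ (hα : 0 < α) (hα' : α < 3 / 2) (n : ℕ) :
    n * (n + 2 - α) * Riesz α (n + 1) = (n + 1) * (n - 1 + α) * Riesz α n := by
  rcases n.eq_zero_or_pos with rfl | hn
  · simp [Riesz_zero]
  have hn' : (1 : ℝ) ≤ n := by exact_mod_cast hn
  have hnum : Gamma ((n + 1 : ℕ) + α - 1) = (n + α - 1) * Gamma (n + α - 1) := by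
    rw [← Gamma_add_one (by linarith)]
    push_cast
    congr 1
    ring
  have hden : Gamma ((n + 1 : ℕ) - α + 2) = (n - α + 2) * Gamma (n - α + 2) := by
    rw [← Gamma_add_one (by linarith)]
    push_cast
    congr 1
    ring
  have hfactor : (n : ℝ) - α + 2 ≠ 0 := by linarith
  rw [Riesz, Riesz, hnum, hden]
  push_cast
  field_simp
  ring

lemma Riesz_one (hα : 0 < α) (hα' : α < 3 / 2) :
    Riesz α 1 = √(2 / π) * sineMoment (-α) 1 := by
  have hΓ := (Gamma_pos_of_pos hα).ne'
  have hthree : Gamma (3 / 2) = √π / 2 := by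
    rw [show (3 / 2 : ℝ) = 1 / 2 + 1 by norm_num, Gamma_add_one (by norm_num), Gamma_one_half_eq]
    ring
  rw [sineMoment_one (by linarith), Riesz, hthree, sqrt_div two_pos.le,
    rpow_add_one four_ne_zero, rpow_neg four_pos.le, Nat.cast_one,
    show 1 + α - 1 = α by ring, show 1 - α + 2 = -α + 3 by ring,
    show 3 / 2 - α = -α + 3 / 2 by ring]
  have := sqrt_pos.2 pi_pos
  field_simp
  norm_num

theorem Riesz_eq_sineMoment (hα : 0 < α) (hα' : α < 3 / 2) (n : ℕ) :
    Riesz α n = √(2 / π) * sineMoment (-α) n := by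
  have hs : -(3 / 2) < -α := by linarith
  induction n with
  | zero => simp [Riesz_zero, sineMoment]
  | succ n ih =>
    rcases n.eq_zero_or_pos with rfl | hn
    · exact Riesz_one hα hα'
    · have hn' : (1 : ℝ) ≤ n := by exact_mod_cast hn
      have hcoeff : (n : ℝ) * (n + 2 - α) ≠ 0 := by
        have : 0 < (n : ℝ) + 2 - α := by linarith
        positivity
      refine mul_left_cancel₀ hcoeff ?_
      linear_combination mul_Riesz_succ hα hα' n + (n + 1) * (n - 1 + α) * ih
        - √(2 / π) * mul_sineMoment_succ hs n

theorem Wweight_mul_Riesz (hα : 0 < α) (hα' : α < 3 / 2) (σ : ℝ) (n : ℕ) :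
    Wweight σ α n * Riesz α n = Riesz (α - σ) n := by
  rcases n.eq_zero_or_pos with rfl | hn
  · simp [Riesz_zero]
  have hn' : (1 : ℝ) ≤ n := by exact_mod_cast hn
  have hΓα := (Gamma_pos_of_pos hα).ne'
  have hΓ := (Gamma_pos_of_pos (show 0 < 3 / 2 - α by linarith)).ne'
  have hnum := (Gamma_pos_of_pos (show 0 < n + α - 1 by linarith)).ne'
  have hden := (Gamma_pos_of_pos (show 0 < n - α + 2 by linarith)).ne'
  rw [Wweight, Riesz, Riesz, rpow_sub four_pos, ← sub_add, ← sub_add, ← add_sub_assoc]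
  generalize Gamma (3 / 2 - α) = c at *
  field_simp

theorem hasSum_Kker_mul_Riesz (hσ : 0 < σ) (hσ1 : σ ≤ 1) (hσα : σ < α) (hα : α < 3 / 2)
    (m : ℕ) : HasSum (fun n => Kker σ m n * Riesz α n) (Riesz (α - σ) m) := by
  have hs : -(3 / 2) < -α := by linarith
  rw [Riesz_eq_sineMoment (sub_pos.2 hσα) (by linarith), neg_sub, sub_eq_neg_add]
  simp only [Riesz_eq_sineMoment (hσ.trans hσα) hα, mul_left_comm (Kker σ m _)]
  exact (hasSum_Kker_mul_sineMoment hσ hσ1 hs m).mul_left _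

end RieszPotential

section HardyKernel

variable {σ α : ℝ}

/-- The kernel of `(-Δ_ℕ)^σ - W_{α,σ}`, on the index set `ℕ+` of the half-line. -/
noncomputable def hardyKernel (σ α : ℝ) : Matrix ℕ+ ℕ+ ℝ :=
  Matrix.of (fun m n : ℕ+ => Kker σ m n) - Matrix.diagonal fun n : ℕ+ => Wweight σ α n

lemma hardyKernel_apply_of_ne (α : ℝ) {m n : ℕ+} (hmn : m ≠ n) :
    hardyKernel σ α m n = Kker σ m n := by
  simp [hardyKernel, Matrix.diagonal_apply_ne _ hmn]

lemma isSchrodingerKernel_hardyKernel (hσ : 0 < σ) (hσ1 : σ ≤ 1) (α : ℝ) :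
    IsSchrodingerKernel (hardyKernel σ α) where
  symm m n := by
    rcases eq_or_ne m n with rfl | hmn
    · rfl
    · rw [hardyKernel_apply_of_ne α hmn, hardyKernel_apply_of_ne α hmn.symm, Kker_comm]
  nonpos m n hmn := by
    rw [hardyKernel_apply_of_ne α hmn]
    exact Kker_nonpos hσ hσ1 (PNat.coe_injective.ne hmn)

lemma reflTransGen_hardyKernel_neg (hσ : 0 < σ) (hσ1 : σ ≤ 1) (α : ℝ) (n : ℕ+) :
    Relation.ReflTransGen (fun a b => hardyKernel σ α a b < 0) 1 n := by
  induction n using PNat.recOn with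
  | one => exact .refl
  | succ n ih =>
    refine ih.tail ?_
    rw [hardyKernel_apply_of_ne α (PNat.lt_add_right n 1).ne]
    exact Kker_succ_neg hσ hσ1 n.pos

lemma isSuperharmonic_hardyKernel_Riesz (hσ : 0 < σ) (hσ1 : σ ≤ 1) (hσα : σ < α)
    (hα : α < 3 / 2) : IsSuperharmonic (hardyKernel σ α) fun n => Riesz α n := by
  intro m
  have hlaplacian : HasSum (fun n : ℕ+ => Kker σ m n * Riesz α n) (Riesz (α - σ) m) := by
    simpa [hasSum_pnat_iff (f := fun n => Kker σ m n * Riesz α n), Riesz_zero] using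
      hasSum_Kker_mul_Riesz hσ hσ1 hσα hα m
  have hweight := hasSum_single
    (f := fun n : ℕ+ => Matrix.diagonal (fun n : ℕ+ => Wweight σ α n) m n * Riesz α n) m
    fun n hn => by rw [Matrix.diagonal_apply_ne' _ hn, zero_mul]
  rw [Matrix.diagonal_apply_eq, Wweight_mul_Riesz (hσ.trans hσα) hα] at hweight
  refine ⟨0, le_rfl, ?_⟩
  simpa only [hardyKernel, Matrix.sub_apply, Matrix.of_apply, sub_mul, sub_self] using
    hlaplacian.sub hweight

variable {f : ℕ+ →₀ ℝ} {g : ℕ → ℝ}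

lemma tsum_eq_sum_pnat_support (hg0 : g 0 = 0) (hgf : ∀ n : ℕ+, g n = f n) {h : ℕ → ℝ}
    (hh : ∀ n, g n = 0 → h n = 0) : ∑' n, h n = ∑ n ∈ f.support, h n := by
  rw [← tsum_pnat_eq_tsum_of_eq_zero (hh 0 hg0), tsum_eq_sum fun n hn => ?_]
  exact hh n (by rw [hgf, Finsupp.notMem_support_iff.1 hn])

lemma tsum_mul_sq_eq_finsuppSum (hg0 : g 0 = 0) (hgf : ∀ n : ℕ+, g n = f n) (V : ℕ → ℝ) :
    ∑' n, V n * g n ^ 2 = f.sum fun n x => V n * x ^ 2 := by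
  rw [tsum_eq_sum_pnat_support hg0 hgf fun n hn => by simp [hn]]
  simp only [hgf, Finsupp.sum]

lemma Qform_eq_kernelForm (hg0 : g 0 = 0) (hgf : ∀ n : ℕ+, g n = f n) :
    Qform σ g = kernelForm (Matrix.of fun m n : ℕ+ => Kker σ m n) f f := by
  rw [Qform, kernelForm_apply_eq_sum _ subset_rfl subset_rfl,
    tsum_eq_sum_pnat_support hg0 hgf fun n hn => by simp [hn]]
  refine Finset.sum_congr rfl fun m _ => ?_
  rw [tsum_eq_sum_pnat_support hg0 hgf fun n hn => by simp [hn]]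
  simp only [hgf, Matrix.of_apply]

lemma tsum_add_mul_sq_le_Qform_iff (hg0 : g 0 = 0) (hgf : ∀ n : ℕ+, g n = f n) (V : ℕ → ℝ) :
    (∑' n, (Wweight σ α n + V n) * g n ^ 2) ≤ Qform σ g
      ↔ (f.sum fun n x => V n * x ^ 2) ≤ kernelForm (hardyKernel σ α) f f := by
  rw [hardyKernel, kernelForm_sub_diagonal, Qform_eq_kernelForm hg0 hgf,
    tsum_mul_sq_eq_finsuppSum hg0 hgf (fun n => Wweight σ α n + V n), le_sub_iff_add_le',
    ← Finsupp.sum_add]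
  simp only [add_mul]

lemma isCritical_hardyKernel
    (hCrit : ¬ ∃ Wt : ℕ → ℝ, (∀ n, 0 ≤ Wt n) ∧ (∃ n, 1 ≤ n ∧ Wt n ≠ 0) ∧
      ∀ f : ℕ → ℝ, f 0 = 0 → (Function.support f).Finite →
        (∑' n : ℕ, (Wweight σ α n + Wt n) * (f n) ^ 2) ≤ Qform σ f) :
    IsCritical (hardyKernel σ α) := by
  intro W hW hhardy
  by_contra hne
  obtain ⟨n, hn⟩ := Function.ne_iff.1 hne
  set Wt : ℕ → ℝ := Function.extend (↑) W 0
  have hWt : ∀ n : ℕ+, Wt n = W n := PNat.coe_injective.extend_apply W 0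
  refine hCrit ⟨Wt, ?_, ⟨n, n.pos, by rwa [hWt]⟩, fun g hg0 hgfin => ?_⟩
  · exact Function.extend_nonneg hW le_rfl
  · have hfin := hgfin.preimage (PNat.coe_injective.injOn)
    refine (tsum_add_mul_sq_le_Qform_iff (f := .ofSupportFinite (fun n : ℕ+ => g n) hfin) hg0
      (fun n => rfl) Wt).2 ?_
    simpa only [hWt] using hhardy _

lemma finsuppSum_mul_sq_le_kernelForm_hardyKernel {K : Finset ℕ} {V : ℕ → ℝ}
    (h : ∀ φ : ℕ → ℝ, φ 0 = 0 → (Function.support φ).Finite → (∀ n ∈ K, φ n = 0) →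
      (∑' n : ℕ, (Wweight σ α n + V n) * (φ n) ^ 2) ≤ Qform σ φ)
    {φ : ℕ+ →₀ ℝ} (hφ : ∀ n : ℕ+, (n : ℕ) ∈ K → φ n = 0) :
    (φ.sum fun n x => V n * x ^ 2) ≤ kernelForm (hardyKernel σ α) φ φ := by
  set g : ℕ →₀ ℝ := φ.embDomain ⟨(↑), PNat.coe_injective⟩
  have hgφ : ∀ n : ℕ+, g n = φ n := Finsupp.embDomain_apply_self _ φ
  have hg0 : g 0 = 0 := Finsupp.embDomain_of_notMem_range _ φ 0 (by simp)
  refine (tsum_add_mul_sq_le_Qform_iff hg0 hgφ V).1 (h g hg0 g.hasFiniteSupport fun n hn => ?_)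
  rcases n.eq_zero_or_pos with rfl | hpos
  · exact hg0
  · exact (hgφ ⟨n, hpos⟩).trans (hφ ⟨n, hpos⟩ hn)

end HardyKernel

theorem stmt_11_general (σ α : ℝ) (hσ0 : 0 < σ) (hσ1 : σ ≤ 1)
    (hα1 : σ < α) (hα2 : α < 3 / 2)
    (hCrit : ¬ ∃ Wt : ℕ → ℝ, (∀ n, 0 ≤ Wt n) ∧ (∃ n, 1 ≤ n ∧ Wt n ≠ 0) ∧
      ∀ f : ℕ → ℝ, f 0 = 0 → (Function.support f).Finite →
        (∑' n : ℕ, (Wweight σ α n + Wt n) * (f n) ^ 2) ≤ Qform σ f)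
    (K : Finset ℕ) (W' : ℕ → ℝ) (hW' : ∀ n, 0 ≤ W' n)
    (h : ∀ φ : ℕ → ℝ, φ 0 = 0 → (Function.support φ).Finite → (∀ n ∈ K, φ n = 0) →
      (∑' n : ℕ, (Wweight σ α n + W' n) * (φ n) ^ 2) ≤ Qform σ φ) :
    Summable (fun n : ℕ => W' n * (Riesz α n) ^ 2) := by
  have hpos : ∀ n : ℕ+, 0 < Riesz α n := fun n => Riesz_pos (hσ0.trans hα1) hα2 n.pos
  have hsum : Summable fun n : ℕ+ => W' n * Riesz α n ^ 2 :=
    (isCritical_hardyKernel hCrit).summable_mul_sq_of_hardy_off_finset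
      (isSuperharmonic_hardyKernel_Riesz hσ0 hσ1 hα1 hα2)
      (isSchrodingerKernel_hardyKernel hσ0 hσ1 α) hpos
      (reflTransGen_hardyKernel_neg hσ0 hσ1 α)
      (K := K.preimage (↑) PNat.coe_injective.injOn) (fun n => hW' n)
      fun φ hφ => finsuppSum_mul_sq_le_kernelForm_hardyKernel h fun n hn =>
        hφ n (Finset.mem_preimage.2 hn)
  exact summable_pnat_iff_summable_nat.1 hsum

/-- Optimality near infinity: if `(-Δ_ℕ)^σ - W_{α,σ}` is critical and the improved
Hardy inequality with an extra weight `W'` holds outside a finite set `K`, then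
`Σ W'(n) I_α(n)² < ∞`. -/
theorem stmt_11 (σ α : ℝ) (hσ0 : 0 < σ) (hσ1 : σ ≤ 1)
    (hα1 : σ < α) (hα2 : α < min (3/2) (1 + σ))
    (hHardy : ∀ f : ℕ → ℝ, f 0 = 0 → (Function.support f).Finite →
      (∑' n : ℕ, Wweight σ α n * (f n) ^ 2) ≤ Qform σ f)
    (hCrit : ¬ ∃ Wt : ℕ → ℝ, (∀ n, 0 ≤ Wt n) ∧ (∃ n, 1 ≤ n ∧ Wt n ≠ 0) ∧
      ∀ f : ℕ → ℝ, f 0 = 0 → (Function.support f).Finite →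
        (∑' n : ℕ, (Wweight σ α n + Wt n) * (f n) ^ 2) ≤ Qform σ f)
    (K : Finset ℕ) (W' : ℕ → ℝ) (hW' : ∀ n, 0 ≤ W' n)
    (h : ∀ φ : ℕ → ℝ, φ 0 = 0 → (Function.support φ).Finite → (∀ n ∈ K, φ n = 0) →
      (∑' n : ℕ, (Wweight σ α n + W' n) * (φ n) ^ 2) ≤ Qform σ φ) :
    Summable (fun n : ℕ => W' n * (Riesz α n) ^ 2) := by
  exact stmt_11_general σ α hσ0 hσ1 hα1 (hα2.trans_le (min_le_left _ _)) hCrit K W' hW' h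
end

section
/- Let σ ∈ (0,1) and let m > n ≥ 1 be integers. Then K^σ_{m,n} = c_σ·( Γ(m+n−σ)/Γ(m+n+σ+1) − Γ(m−n−σ)/Γ(m−n+σ+1) ), where c_σ := −Γ(σ+1/2)·4^σ/(√π·Γ(−σ)); moreover c_σ > 0. -/
open Real Filter

/-!
By Euler's reflection formula `1 / Γ(σ - k + 1) = Γ(k - σ) sin (π (k - σ)) / π`, and shifting the
sine by `k π` only costs a sign, so `binom(2σ, σ + k)` is `-(-1) ^ k Γ(2σ + 1) sin (π σ) / π` times
`Γ(k - σ) / Γ(k + σ + 1)`. The signs for `k = m - n` and `k = m + n` both cancel the prefactor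
`(-1) ^ (m + n)` of the kernel. Reflection at `-σ` and Legendre's duplication formula give
`c_σ = Γ(2σ + 1) sin (π σ) / π`, so `c_σ` has the sign of `sin (π σ)`.
-/

theorem inv_Gamma_eq_Gamma_one_sub_mul_sin {s : ℝ} (hs : Gamma (1 - s) ≠ 0) :
    (Gamma s)⁻¹ = Gamma (1 - s) * sin (π * s) / π := by
  rw [eq_div_of_mul_eq hs (Gamma_mul_Gamma_one_sub s), inv_div, div_div_eq_mul_div]

theorem Gamma_add_half_mul_Gamma_add_one_mul_four_rpow (s : ℝ) :
    Gamma (s + 1 / 2) * Gamma (s + 1) * 4 ^ s = Gamma (2 * s + 1) * √π := by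
  have duplication := Gamma_mul_Gamma_add_half (s + 1 / 2)
  have four_rpow : (4 : ℝ) ^ s = 2 ^ (2 * s) := by
    rw [rpow_mul zero_le_two]; norm_num
  rw [show s + 1 / 2 + 1 / 2 = s + 1 by ring, show 2 * (s + 1 / 2) = 2 * s + 1 by ring,
    show 1 - (2 * s + 1) = -(2 * s) by ring, rpow_neg zero_le_two] at duplication
  rw [duplication, four_rpow]
  field_simp

theorem neg_Gamma_add_half_mul_four_rpow_div_eq {σ : ℝ} (hσ : Gamma (σ + 1) ≠ 0) :
    -(Gamma (σ + 1 / 2) * 4 ^ σ / (√π * Gamma (-σ))) = Gamma (2 * σ + 1) * sin (π * σ) / π := by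
  have reflection : (Gamma (-σ))⁻¹ = -(Gamma (σ + 1) * sin (π * σ) / π) := by
    rw [inv_Gamma_eq_Gamma_one_sub_mul_sin (by rwa [sub_neg_eq_add, add_comm]), sub_neg_eq_add,
      add_comm 1 σ, mul_neg, sin_neg, mul_neg, neg_div]
  calc -(Gamma (σ + 1 / 2) * 4 ^ σ / (√π * Gamma (-σ)))
      = Gamma (σ + 1 / 2) * Gamma (σ + 1) * 4 ^ σ * sin (π * σ) / (√π * π) := by
        rw [div_eq_mul_inv, mul_inv, reflection]; field_simp
    _ = Gamma (2 * σ + 1) * sin (π * σ) / π := by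
        rw [Gamma_add_half_mul_Gamma_add_one_mul_four_rpow]; field_simp

theorem rbinom_two_mul_add_int {σ : ℝ} {k : ℤ} (hk : Gamma (k - σ) ≠ 0) :
    rbinom (2 * σ) (σ + k) =
      -(-1) ^ k * (Gamma (2 * σ + 1) * sin (π * σ) / π) * (Gamma (k - σ) / Gamma (k + σ + 1)) := by
  have sin_shift : sin (π * (σ - k + 1)) = -((-1) ^ k * sin (π * σ)) := by
    rw [show π * (σ - k + 1) = π - (k * π - π * σ) by ring, sin_pi_sub, sin_int_mul_pi_sub]
  have reflection : (Gamma (σ - k + 1))⁻¹ = Gamma (k - σ) * -((-1) ^ k * sin (π * σ)) / π := by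
    have one_sub : 1 - (σ - k + 1) = k - σ := by ring
    rw [inv_Gamma_eq_Gamma_one_sub_mul_sin (by rwa [one_sub]), one_sub, sin_shift]
  rw [rbinom, show 2 * σ - (σ + k) + 1 = σ - k + 1 by ring, add_comm σ (k : ℝ), div_eq_mul_inv,
    mul_inv, reflection]
  ring

theorem Kker_eq_Gamma_mul_sin {σ : ℝ} {m n : ℕ} (hsub : Gamma ((m : ℝ) - n - σ) ≠ 0)
    (hadd : Gamma ((m : ℝ) + n - σ) ≠ 0) :
    Kker σ m n =
      Gamma (2 * σ + 1) * sin (π * σ) / π *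
        (Gamma ((m : ℝ) + n - σ) / Gamma ((m : ℝ) + n + σ + 1) -
          Gamma ((m : ℝ) - n - σ) / Gamma ((m : ℝ) - n + σ + 1)) := by
  have rbinom_sub := rbinom_two_mul_add_int (σ := σ) (k := m - n) (by exact_mod_cast hsub)
  have rbinom_add := rbinom_two_mul_add_int (σ := σ) (k := m + n) (by exact_mod_cast hadd)
  have same_sign : (-1 : ℝ) ^ ((m : ℤ) - n) = (-1) ^ (m + n) := by
    rw [← zpow_natCast, Nat.cast_add, zpow_sub₀ (by norm_num), zpow_add₀ (by norm_num),
      div_eq_mul_inv, ← inv_zpow, inv_neg_one]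
  have sign_mul_self : (-1 : ℝ) ^ (m + n) * (-1) ^ (m + n) = 1 := by
    rw [← mul_pow, neg_one_mul, neg_neg, one_pow]
  rw [same_sign] at rbinom_sub
  rw [← Nat.cast_add, zpow_natCast] at rbinom_add
  push_cast [← add_sub_assoc, ← add_assoc] at rbinom_sub rbinom_add
  rw [Kker, rbinom_sub, rbinom_add]
  linear_combination Gamma (2 * σ + 1) * sin (π * σ) / π *
    (Gamma ((m : ℝ) + n - σ) / Gamma ((m : ℝ) + n + σ + 1) -
      Gamma ((m : ℝ) - n - σ) / Gamma ((m : ℝ) - n + σ + 1)) * sign_mul_self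

theorem Gamma_int_sub_ne_zero {σ : ℝ} (hσ : ∀ k : ℤ, σ ≠ k) (k : ℤ) : Gamma (k - σ) ≠ 0 :=
  Gamma_ne_zero fun j hj => hσ (k + j) (by push_cast; linarith)

theorem stmt_14_general {σ : ℝ} (hσ : -1 / 2 < σ) (hσ_int : ∀ k : ℤ, σ ≠ k) (m n : ℕ) :
    Kker σ m n =
      (-(Gamma (σ + 1 / 2) * 4 ^ σ / (√π * Gamma (-σ)))) *
        (Gamma ((m : ℝ) + n - σ) / Gamma ((m : ℝ) + n + σ + 1) -
          Gamma ((m : ℝ) - n - σ) / Gamma ((m : ℝ) - n + σ + 1)) ∧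
    (0 < -(Gamma (σ + 1 / 2) * 4 ^ σ / (√π * Gamma (-σ))) ↔ 0 < sin (π * σ)) := by
  have hsub : Gamma ((m : ℝ) - n - σ) ≠ 0 := by
    exact_mod_cast Gamma_int_sub_ne_zero hσ_int (m - n)
  have hadd : Gamma ((m : ℝ) + n - σ) ≠ 0 := by
    exact_mod_cast Gamma_int_sub_ne_zero hσ_int (m + n)
  have Gamma_two_mul_pos : 0 < Gamma (2 * σ + 1) := Gamma_pos_of_pos (by linarith)
  rw [neg_Gamma_add_half_mul_four_rpow_div_eq (Gamma_pos_of_pos (by linarith)).ne',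
    div_pos_iff_of_pos_right pi_pos, mul_pos_iff_of_pos_left Gamma_two_mul_pos]
  exact ⟨Kker_eq_Gamma_mul_sin hsub hadd, Iff.rfl⟩

theorem ne_intCast_of_pos_of_lt_one {x : ℝ} (hx₀ : 0 < x) (hx₁ : x < 1) (k : ℤ) : x ≠ k := by
  rintro rfl
  norm_cast at hx₀ hx₁
  lia

/-- Closed form of the kernel `K^σ_{m,n}` for `m > n ≥ 1`, with positive constant `c_σ`. -/
theorem stmt_14 (σ : ℝ) (hσ0 : 0 < σ) (hσ1 : σ < 1)
    (m n : ℕ) (hn : 1 ≤ n) (hmn : n < m) :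
    Kker σ m n =
      (-(Real.Gamma (σ + 1/2) * 4 ^ σ / (Real.sqrt π * Real.Gamma (-σ)))) *
        (Real.Gamma ((m : ℝ) + n - σ) / Real.Gamma ((m : ℝ) + n + σ + 1) -
          Real.Gamma ((m : ℝ) - n - σ) / Real.Gamma ((m : ℝ) - n + σ + 1)) ∧
    0 < -(Real.Gamma (σ + 1/2) * 4 ^ σ / (Real.sqrt π * Real.Gamma (-σ))) := by
  have closed_form := stmt_14_general (by linarith) (ne_intCast_of_pos_of_lt_one hσ0 hσ1) m n
  exact closed_form.imp_right fun sign =>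
    sign.2 (sin_pos_of_pos_of_lt_pi (by positivity) (mul_lt_of_lt_one_right pi_pos hσ1))
end

section
/- Let σ ∈ (0,1). Then there exists a constant C > 0, depending only on σ, such that for all integers m, n ≥ 1 with m ≠ n one has |K^σ_{m,n}| ≤ C·|m−n|^{−2σ−1}. -/
open Real Filter

/-!
The recursion `binom(a, b + 1) = binom(a, b) (a - b) / (b + 1)` and the inequality
`1 - p / x ≤ (x / (x + 1)) ^ p` show that `|binom(a, b)| (b + 1) ^ (a + 1)` does not increase when
`b ≥ a` is replaced by `b + 1`. Hence `binom(a, b + k) = O(k ^ (-a - 1))`. By the symmetry of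
`binom(2σ, ·)` about `σ`, the two terms of the kernel are `binom(2σ, σ + |m - n|)` and
`binom(2σ, σ + m + n)`, and both are controlled by this decay because `|m - n| ≤ m + n`.
-/

theorem rbinom_symm (a b : ℝ) : rbinom a (a - b) = rbinom a b := by
  unfold rbinom
  rw [sub_sub_cancel, mul_comm]

theorem rbinom_two_mul_add_abs (σ x : ℝ) :
    rbinom (2 * σ) (σ + |x|) = rbinom (2 * σ) (σ + x) := by
  rcases abs_choice x with h | h
  · rw [h]
  · rw [h, ← rbinom_symm]
    congr 1
    ring

theorem rbinom_add_one (a : ℝ) {b : ℝ} (hb : b ≠ -1) :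
    rbinom a (b + 1) = rbinom a b * ((a - b) / (b + 1)) := by
  have hb' : b + 1 ≠ 0 := fun h => hb (eq_neg_of_add_eq_zero_left h)
  unfold rbinom
  rw [Gamma_add_one hb', show a - (b + 1) + 1 = a - b by ring]
  rcases eq_or_ne (a - b) 0 with hab | hab
  · -- Mathlib's `Gamma 0 = 0` and `x / 0 = 0` give `rbinom a (a + 1) = 0`, its classical value.
    simp only [hab, Gamma_zero, mul_zero, div_zero, zero_div]
  · rw [Gamma_add_one hab, div_mul_div_comm,
      ← mul_div_mul_right _ ((b + 1) * Gamma (b + 1) * Gamma (a - b)) hab]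
    ring_nf

theorem one_sub_div_le_div_add_one_rpow {p x : ℝ} (hp : 0 ≤ p) (hx : 0 < x) :
    1 - p / x ≤ (x / (x + 1)) ^ p := by
  have log_lower : -(1 / x) ≤ log (x / (x + 1)) := by
    have h := one_sub_inv_le_log_of_pos (show 0 < x / (x + 1) by positivity)
    rwa [inv_div, add_div, div_self hx.ne', sub_add_cancel_left] at h
  calc 1 - p / x ≤ exp (-(p / x)) := one_sub_le_exp_neg _
    _ = exp (-(1 / x) * p) := by ring_nf
    _ ≤ exp (log (x / (x + 1)) * p) := by gcongr
    _ = (x / (x + 1)) ^ p := (rpow_def_of_pos (by positivity) p).symm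

theorem abs_rbinom_add_one_mul_rpow_le {a b : ℝ} (ha : -1 ≤ a) (hab : a ≤ b) (hb : -1 < b) :
    |rbinom a (b + 1)| * (b + 1 + 1) ^ (a + 1) ≤ |rbinom a b| * (b + 1) ^ (a + 1) := by
  have hx : 0 < b + 1 := by linarith
  have ratio_le : |(a - b) / (b + 1)| ≤ (b + 1) ^ (a + 1) / (b + 1 + 1) ^ (a + 1) := by
    calc |(a - b) / (b + 1)| = (b - a) / (b + 1) := by
          rw [abs_div, abs_sub_comm, abs_of_nonneg (sub_nonneg.2 hab), abs_of_pos hx]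
      _ = 1 - (a + 1) / (b + 1) := by field_simp; ring
      _ ≤ ((b + 1) / (b + 1 + 1)) ^ (a + 1) :=
          one_sub_div_le_div_add_one_rpow (by linarith) hx
      _ = (b + 1) ^ (a + 1) / (b + 1 + 1) ^ (a + 1) := div_rpow hx.le (by linarith) _
  rw [rbinom_add_one a hb.ne', abs_mul, mul_assoc]
  gcongr
  rwa [← le_div_iff₀ (by positivity)]

theorem antitone_abs_rbinom_add_natCast_mul_rpow {a b : ℝ} (ha : -1 ≤ a) (hab : a ≤ b)
    (hb : -1 < b) : Antitone fun k : ℕ => |rbinom a (b + k)| * (b + k + 1) ^ (a + 1) := by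
  refine antitone_nat_of_succ_le fun k => ?_
  have hk : b ≤ b + k := le_add_of_nonneg_right k.cast_nonneg
  simpa only [Nat.cast_succ, add_assoc] using
    abs_rbinom_add_one_mul_rpow_le ha (hab.trans hk) (hb.trans_le hk)

theorem isBigO_rbinom_add_natCast {a b : ℝ} (ha : -1 ≤ a) (hb : -1 ≤ b) :
    (fun k : ℕ => rbinom a (b + k)) =O[atTop] fun k : ℕ => (k : ℝ) ^ (-a - 1) := by
  obtain ⟨N, hN⟩ := exists_nat_gt (a - b)
  have antitone_tail :=
    antitone_abs_rbinom_add_natCast_mul_rpow (b := b + N) ha (by linarith) (by linarith)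
  refine .of_bound (|rbinom a (b + N)| * (b + N + 1) ^ (a + 1)) ?_
  filter_upwards [eventually_ge_atTop N, eventually_gt_atTop 0] with k hNk hk
  obtain ⟨j, rfl⟩ := Nat.exists_eq_add_of_le hNk
  have hpos : (0 : ℝ) < (N + j : ℕ) := by exact_mod_cast hk
  rw [norm_eq_abs, norm_of_nonneg (by positivity), ← neg_add', rpow_neg hpos.le,
    ← div_eq_mul_inv, le_div_iff₀ (by positivity)]
  calc |rbinom a (b + (N + j : ℕ))| * ((N + j : ℕ) : ℝ) ^ (a + 1)
      ≤ |rbinom a (b + (N + j : ℕ))| * (b + (N + j : ℕ) + 1) ^ (a + 1) := by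
        gcongr <;> linarith
    _ ≤ |rbinom a (b + N)| * (b + N + 1) ^ (a + 1) := by
        simpa only [Nat.cast_add, Nat.cast_zero, add_zero, add_assoc] using
          antitone_tail j.zero_le

theorem abs_Kker_le (σ : ℝ) (m n : ℕ) :
    |Kker σ m n| ≤
      |rbinom (2 * σ) (σ + |(m : ℝ) - n|)| + |rbinom (2 * σ) (σ + (m + n : ℕ))| := by
  rw [rbinom_two_mul_add_abs, Kker, abs_mul, abs_neg_one_pow, one_mul, Nat.cast_add,
    ← add_sub_assoc, ← add_assoc]
  exact abs_sub _ _

theorem stmt_15_general {σ : ℝ} (hσ : -1 / 2 < σ) :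
    ∃ C : ℝ, 0 < C ∧ ∀ m n : ℕ, m ≠ n →
      |Kker σ m n| ≤ C * |(m : ℝ) - n| ^ (-(2 * σ) - 1) := by
  obtain ⟨C, hC, rbinom_le⟩ := Asymptotics.bound_of_isBigO_nat_atTop
    (isBigO_rbinom_add_natCast (a := 2 * σ) (b := σ) (by linarith) (by linarith))
  have decay {d : ℕ} (hd : 0 < d) :
      |rbinom (2 * σ) (σ + d)| ≤ C * (d : ℝ) ^ (-(2 * σ) - 1) := by
    have hpos : 0 < (d : ℝ) ^ (-(2 * σ) - 1) := by positivity
    simpa only [norm_eq_abs, abs_of_pos hpos] using rbinom_le hpos.ne'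
  refine ⟨2 * C, by positivity, fun m n hmn => ?_⟩
  obtain ⟨d, hd, hdle, hdist⟩ : ∃ d : ℕ, 0 < d ∧ d ≤ m + n ∧ |(m : ℝ) - n| = d :=
    ⟨((m : ℤ) - n).natAbs, by omega, by omega, by push_cast [Nat.cast_natAbs]; rfl⟩
  calc |Kker σ m n|
      ≤ |rbinom (2 * σ) (σ + d)| + |rbinom (2 * σ) (σ + (m + n : ℕ))| := hdist ▸ abs_Kker_le σ m n
    _ ≤ C * (d : ℝ) ^ (-(2 * σ) - 1) + C * ((m + n : ℕ) : ℝ) ^ (-(2 * σ) - 1) :=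
        add_le_add (decay hd) (decay (hd.trans_le hdle))
    _ ≤ C * (d : ℝ) ^ (-(2 * σ) - 1) + C * (d : ℝ) ^ (-(2 * σ) - 1) := by
        gcongr _ + C * ?_
        exact rpow_le_rpow_of_nonpos (by positivity) (by exact_mod_cast hdle) (by linarith)
    _ = 2 * C * |(m : ℝ) - n| ^ (-(2 * σ) - 1) := by rw [hdist]; ring

/-- Off-diagonal decay of the kernel: `|K^σ_{m,n}| ≤ C |m-n|^{-2σ-1}`. -/
theorem stmt_15 (σ : ℝ) (hσ0 : 0 < σ) (hσ1 : σ < 1) :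
    ∃ C : ℝ, 0 < C ∧ ∀ m n : ℕ, 1 ≤ m → 1 ≤ n → m ≠ n →
      |Kker σ m n| ≤ C * |(m : ℝ) - n| ^ (-(2 * σ) - 1) :=
  let ⟨C, hC, hbound⟩ := stmt_15_general (σ := σ) (by linarith)
  ⟨C, hC, fun m n _ _ => hbound m n⟩
end

section
/- There exists N ∈ ℕ such that for every integer n ≥ N, (1/4)·1/(n² − 9/16) > 2 − √(1 + 1/n) − √(1 − 1/n); that is, the optimal Hardy-weight W^op_1(n) = (1/4)/(n² − 9/16) is strictly larger than the Keller–Pinchover–Pogorzelski weight W^KPP(n) = 2 − √(1+1/n) − √(1−1/n) near infinity. -/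
open Real Filter

/-!
Both square roots can be removed without loss: `c < √a + √b` follows from
`((c ^ 2 - a - b) / 2) ^ 2 < a * b`. With `x = 1 / n`, `y = x ^ 2` and
`a = 1 + x`, `b = 1 - x`, `c = 2 - 4 * y / (16 - 9 * y)`, clearing denominators turns this into the
positivity of `y ^ 2 * (16384 - 37120 * y + 27296 * y ^ 2 - 6561 * y ^ 3)`. The cubic equals `-1` at
`y = 1`, so the inequality between the weights is reversed at `n = 1`, while it holds from `n = 2`
on.
-/

theorem lt_sqrt_add_sqrt {a b c : ℝ} (ha : 0 ≤ a) (hb : 0 ≤ b)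
    (h : ((c ^ 2 - a - b) / 2) ^ 2 < a * b) : c < √a + √b := by
  have geom_mean : (c ^ 2 - a - b) / 2 < √a * √b := by
    rw [← sqrt_mul ha]
    exact lt_sqrt_of_sq_lt h
  have sq_lt : c ^ 2 < (√a + √b) ^ 2 := by
    rw [add_sq, sq_sqrt ha, sq_sqrt hb]
    linarith
  exact lt_of_pow_lt_pow_left₀ 2 (by positivity) sq_lt

theorem sq_lt_one_sub_mul_pow_four {y : ℝ} (hy₀ : y ≠ 0) (hy : y ≤ 1 / 4) :
    (256 - 416 * y + 161 * y ^ 2) ^ 2 < (1 - y) * (16 - 9 * y) ^ 4 := by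
  have cubic_pos : 0 < 16384 - 37120 * y + 27296 * y ^ 2 - 6561 * y ^ 3 := by
    have : 0 ≤ y ^ 2 * (27296 - 6561 * y) := mul_nonneg (sq_nonneg y) (by linarith)
    linarith
  rw [← sub_pos]
  calc 0 < y ^ 2 * (16384 - 37120 * y + 27296 * y ^ 2 - 6561 * y ^ 3) := by positivity
    _ = (1 - y) * (16 - 9 * y) ^ 4 - (256 - 416 * y + 161 * y ^ 2) ^ 2 := by ring

theorem two_sub_lt_sqrt_one_add_add_sqrt_one_sub {x : ℝ} (hx₀ : x ≠ 0) (hx : |x| ≤ 1 / 2) :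
    2 - 4 * x ^ 2 / (16 - 9 * x ^ 2) < √(1 + x) + √(1 - x) := by
  obtain ⟨hx_ge, hx_le⟩ := abs_le.mp hx
  have hy : x ^ 2 ≤ 1 / 4 := by
    rw [← sq_abs, show (1 / 4 : ℝ) = (1 / 2) ^ 2 by norm_num]
    gcongr
  have hden : 0 < 16 - 9 * x ^ 2 := by linarith
  refine lt_sqrt_add_sqrt (by linarith) (by linarith) ?_
  calc (((2 - 4 * x ^ 2 / (16 - 9 * x ^ 2)) ^ 2 - (1 + x) - (1 - x)) / 2) ^ 2
      = (256 - 416 * x ^ 2 + 161 * (x ^ 2) ^ 2) ^ 2 / (16 - 9 * x ^ 2) ^ 4 := by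
        -- `field_simp` looks for the nonvanishing of the denominator in this ordering.
        have hden_ne : 16 - x ^ 2 * 9 ≠ 0 := by linarith
        field_simp
        ring
    _ < 1 - x ^ 2 := by
        rw [div_lt_iff₀ (by positivity)]
        exact sq_lt_one_sub_mul_pow_four (pow_ne_zero 2 hx₀) hy
    _ = (1 + x) * (1 - x) := by ring

theorem stmt_16_general {t : ℝ} (ht : 2 ≤ |t|) :
    2 - √(1 + 1 / t) - √(1 - 1 / t) < (1 / 4) * (1 / (t ^ 2 - 9 / 16)) := by
  have ht₀ : t ≠ 0 := abs_pos.mp (by linarith)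
  have inv_le : |1 / t| ≤ 1 / 2 := by
    rw [abs_one_div]
    gcongr
  have sqrt_bound := two_sub_lt_sqrt_one_add_add_sqrt_one_sub (one_div_ne_zero ht₀) inv_le
  have weight_eq : 4 * (1 / t) ^ 2 / (16 - 9 * (1 / t) ^ 2) = 1 / 4 * (1 / (t ^ 2 - 9 / 16)) := by
    field_simp
    norm_num
  linarith

/-- Near infinity the weight `W^op_1` is strictly larger than the
Keller--Pinchover--Pogorzelski weight `W^KPP`. -/
theorem stmt_16 :
    ∃ N : ℕ, ∀ n : ℕ, N ≤ n →
      2 - Real.sqrt (1 + 1 / (n : ℝ)) - Real.sqrt (1 - 1 / (n : ℝ)) <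
        (1/4) * (1 / ((n : ℝ) ^ 2 - 9/16)) := by
  refine ⟨2, fun n hn => stmt_16_general ?_⟩
  rw [Nat.abs_cast]
  exact_mod_cast hn
end

section
/- Let σ ∈ ℝ with σ > 0 and σ not an integer, and let n ≥ 1 be an integer. Then Σ_{m=−n+1}^{n} (−1)^m·binom(2σ, σ+m) = −2·(−1)^n·n·Γ(2σ)/(Γ(1+σ−n)·Γ(1+σ+n)). -/
open Real Filter

/-!
Pascal's rule makes the alternating sum telescope: `(-1)^m binom(a, b+m)` is the difference
`g m - g (m - 1)` for `g m = (-1)^m binom(a-1, b+m)`. Over `-n < m ≤ n` only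
`(-1)^n (binom(2σ-1, σ+n) - binom(2σ-1, σ-n))` survives, since `n` and `-n` have the same parity.
The functional equation of `Γ` turns this difference into the closed form.
-/

theorem sum_Ioc_int_sub {G : Type*} [AddCommGroup G] (g : ℤ → G) {k l : ℤ} (hkl : k ≤ l) :
    ∑ m ∈ Finset.Ioc k l, (g m - g (m - 1)) = g l - g k := by
  induction l, hkl using Int.leInduction with
  | base => simp
  | succ l hkl ih =>
    rw [← Finset.insert_Ioc_right_eq_Ioc_add_one hkl, Finset.sum_insert (by simp), ih,
      add_sub_cancel_right, sub_add_sub_cancel]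

-- `Gamma` takes the value `0` at its poles and `0⁻¹ = 0`, so `Gamma⁻¹` agrees there with the
-- entire function `1/Γ`.
theorem inv_Gamma_eq_mul_inv_Gamma_add_one (s : ℝ) :
    (Gamma s)⁻¹ = s * (Gamma (s + 1))⁻¹ := by
  rcases eq_or_ne s 0 with rfl | hs
  · simp
  · rw [Gamma_add_one hs, mul_inv, mul_inv_cancel_left₀ hs]

theorem rbinom_eq_sub_one_add_sub_one {a : ℝ} (ha : a ≠ 0) (b : ℝ) :
    rbinom a b = rbinom (a - 1) b + rbinom (a - 1) (b - 1) := by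
  have lower : (Gamma b)⁻¹ = b * (Gamma (b + 1))⁻¹ := inv_Gamma_eq_mul_inv_Gamma_add_one b
  have upper : (Gamma (a - b))⁻¹ = (a - b) * (Gamma (a - b + 1))⁻¹ :=
    inv_Gamma_eq_mul_inv_Gamma_add_one (a - b)
  calc
    rbinom a b = a * Gamma a * ((Gamma (b + 1))⁻¹ * (Gamma (a - b + 1))⁻¹) := by
      rw [rbinom, Gamma_add_one ha, div_eq_mul_inv, mul_inv]
    _ = Gamma a * ((Gamma (b + 1))⁻¹ * (Gamma (a - b))⁻¹)
        + Gamma a * ((Gamma b)⁻¹ * (Gamma (a - b + 1))⁻¹) := by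
      rw [lower, upper]
      ring
    _ = rbinom (a - 1) b + rbinom (a - 1) (b - 1) := by
      simp only [rbinom, div_eq_mul_inv, mul_inv, sub_add_cancel, sub_sub_sub_cancel_right,
        sub_right_comm a 1 b]

theorem sum_Ioc_neg_one_zpow_mul_rbinom {a : ℝ} (ha : a ≠ 0) (b : ℝ) {k l : ℤ} (hkl : k ≤ l) :
    ∑ m ∈ Finset.Ioc k l, (-1 : ℝ) ^ m * rbinom a (b + m) =
      (-1) ^ l * rbinom (a - 1) (b + l) - (-1) ^ k * rbinom (a - 1) (b + k) := by
  rw [← sum_Ioc_int_sub (fun m : ℤ ↦ (-1 : ℝ) ^ m * rbinom (a - 1) (b + m)) hkl]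
  refine Finset.sum_congr rfl fun m _ ↦ ?_
  have sign_flip : (-1 : ℝ) ^ (m - 1) = -(-1) ^ m := by
    rw [zpow_sub_one₀ (by norm_num), inv_neg_one, mul_neg_one]
  rw [sign_flip, rbinom_eq_sub_one_add_sub_one ha, Int.cast_sub, Int.cast_one, add_sub_assoc]
  ring

theorem rbinom_two_mul_sub_one_add_sub_rbinom_sub (s x : ℝ) :
    rbinom (2 * s - 1) (s + x) - rbinom (2 * s - 1) (s - x) =
      -2 * x * Gamma (2 * s) / (Gamma (1 + s - x) * Gamma (1 + s + x)) := by
  have rbinom_shift (y : ℝ) : rbinom (2 * s - 1) (s + y) =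
      (s - y) * (Gamma (2 * s) * ((Gamma (1 + s - y))⁻¹ * (Gamma (1 + s + y))⁻¹)) := by
    rw [rbinom, sub_add_cancel, div_eq_mul_inv, mul_inv,
      show 2 * s - 1 - (s + y) + 1 = s - y by ring, inv_Gamma_eq_mul_inv_Gamma_add_one (s - y),
      show s - y + 1 = 1 + s - y by ring, show s + y + 1 = 1 + s + y by ring]
    ring
  rw [sub_eq_add_neg s x, rbinom_shift x, rbinom_shift (-x), sub_neg_eq_add, sub_neg_eq_add,
    ← sub_eq_add_neg, div_eq_mul_inv, mul_inv]
  ring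

theorem stmt_18_general {σ : ℝ} (hσ : ∀ k : ℕ, 2 * σ ≠ -k) (n : ℕ) :
    (∑ m ∈ Finset.Icc (-(n : ℤ) + 1) (n : ℤ), (-1 : ℝ) ^ m * rbinom (2 * σ) (σ + m)) =
      -2 * (-1 : ℝ) ^ n * n * Gamma (2 * σ) / (Gamma (1 + σ - n) * Gamma (1 + σ + n)) := by
  have two_mul_ne_zero : 2 * σ ≠ 0 := by simpa using hσ 0
  have same_sign : (-1 : ℝ) ^ (-(n : ℤ)) = (-1) ^ n := by
    rw [zpow_neg, zpow_natCast, ← inv_pow, inv_neg_one]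
  calc
    _ = (-1) ^ n * (rbinom (2 * σ - 1) (σ + n) - rbinom (2 * σ - 1) (σ - n)) := by
      rw [Finset.Icc_add_one_left_eq_Ioc,
        sum_Ioc_neg_one_zpow_mul_rbinom two_mul_ne_zero σ (by lia : -(n : ℤ) ≤ n), same_sign,
        zpow_natCast, ← mul_sub, Int.cast_neg, Int.cast_natCast, ← sub_eq_add_neg]
    _ = _ := by
      rw [rbinom_two_mul_sub_one_add_sub_rbinom_sub]
      ring

/-- Symmetric alternating sum of binomial coefficients (Lemma A.3). -/
theorem stmt_18 (σ : ℝ) (hσ0 : 0 < σ) (hσint : ∀ k : ℤ, σ ≠ (k : ℝ))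
    (n : ℕ) (hn : 1 ≤ n) :
    (∑ m ∈ Finset.Icc (-(n : ℤ) + 1) (n : ℤ), (-1 : ℝ) ^ m * rbinom (2 * σ) (σ + m)) =
      -2 * (-1 : ℝ) ^ n * n * Real.Gamma (2 * σ) /
        (Real.Gamma (1 + σ - n) * Real.Gamma (1 + σ + n)) := by
  exact stmt_18_general (fun k hk ↦ by linarith [(Nat.cast_nonneg k : (0 : ℝ) ≤ k)]) n
end

section
/- Let α ∈ ℝ with α not an integer, and let n ≥ 1 be an integer. Then Γ(α−n−1)/Γ(−n−α) − Γ(α+n−1)/Γ(n−α) = 2n·(2α−1)·Γ(n+α−1)/Γ(n−α+2). -/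
open Real Filter

/-!
Put `f x = Γ(x + α) / Γ(x + 1 - α)`. The reflection formula and the periodicity of the sine make `f`
even on the integers, so the left-hand side `f (-(n + 1)) - f (n - 1)` equals
`f (n + 1) - f (n - 1)`. With `y = n + α - 1` and `z = n - α` the functional equation turns this
difference into `(y (y + 1) - z (z + 1)) Γ(y) / Γ(z + 2)`, and
`y (y + 1) - z (z + 1) = (y - z) (y + z + 1) = 2 n (2 α - 1)`.
-/

theorem complexGamma_add_int_mul_Gamma_one_sub (s : ℂ) (k : ℤ) :
    Complex.Gamma (s + k) * Complex.Gamma (1 - (s + k)) =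
      (-1) ^ k * (Complex.Gamma s * Complex.Gamma (1 - s)) := by
  have sin_shift : Complex.sin (π * (s + k)) = (-1) ^ k * Complex.sin (π * s) := by
    rw [mul_add, mul_comm (π : ℂ) k, Complex.sin_antiperiodic.add_int_mul_eq, Int.cast_negOnePow]
  have sign_inv : ((-1 : ℂ) ^ k)⁻¹ = (-1) ^ k := by
    rw [← inv_zpow, inv_neg_one]
  rw [Complex.Gamma_mul_Gamma_one_sub, Complex.Gamma_mul_Gamma_one_sub, sin_shift,
    div_mul_eq_div_div_swap, div_eq_mul_inv _ ((-1 : ℂ) ^ k), sign_inv, mul_comm]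

theorem complexGamma_int_sub_ne_zero {α : ℂ} (hα : ∀ k : ℤ, α ≠ k) (m : ℤ) :
    Complex.Gamma (m - α) ≠ 0 := by
  refine Complex.Gamma_ne_zero fun j pole ↦ hα (m + j) ?_
  push_cast
  linear_combination -pole

theorem complexGamma_neg_int_add_div_Gamma_add_one_sub {α : ℂ} (hα : ∀ k : ℤ, α ≠ k) (m : ℤ) :
    Complex.Gamma (-m + α) / Complex.Gamma (-m + 1 - α) =
      Complex.Gamma (m + α) / Complex.Gamma (m + 1 - α) := by
  have hneg : Complex.Gamma (-m + 1 - α) ≠ 0 := by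
    exact_mod_cast complexGamma_int_sub_ne_zero hα (-m + 1)
  have hpos : Complex.Gamma (m + 1 - α) ≠ 0 := by
    exact_mod_cast complexGamma_int_sub_ne_zero hα (m + 1)
  have reflect := complexGamma_add_int_mul_Gamma_one_sub (-m + α) (2 * m)
  rw [(even_two_mul m).neg_one_zpow, one_mul] at reflect
  rw [div_eq_div_iff hneg hpos]
  convert reflect.symm using 3 <;> push_cast <;> ring

theorem complexGamma_add_two {s : ℂ} (h₀ : s ≠ 0) (h₁ : s + 1 ≠ 0) :
    Complex.Gamma (s + 2) = s * (s + 1) * Complex.Gamma s := by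
  rw [← one_add_one_eq_two, ← add_assoc, Complex.Gamma_add_one _ h₁, Complex.Gamma_add_one _ h₀]
  ring

theorem inv_complexGamma_eq_mul_inv_complexGamma_add_two (s : ℂ) :
    (Complex.Gamma s)⁻¹ = s * (s + 1) * (Complex.Gamma (s + 2))⁻¹ := by
  rw [Complex.one_div_Gamma_eq_self_mul_one_div_Gamma_add_one s,
    Complex.one_div_Gamma_eq_self_mul_one_div_Gamma_add_one (s + 1), add_assoc, one_add_one_eq_two,
    mul_assoc]

theorem complexGamma_add_two_div_Gamma_add_two_sub {y : ℂ} (hy₀ : y ≠ 0) (hy₁ : y + 1 ≠ 0) (z : ℂ) :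
    Complex.Gamma (y + 2) / Complex.Gamma (z + 2) - Complex.Gamma y / Complex.Gamma z =
      (y - z) * (y + z + 1) * Complex.Gamma y / Complex.Gamma (z + 2) := by
  rw [div_eq_mul_inv (Complex.Gamma y), inv_complexGamma_eq_mul_inv_complexGamma_add_two z,
    complexGamma_add_two hy₀ hy₁]
  ring

theorem stmt_19_general (α : ℂ) (hα : ∀ k : ℤ, α ≠ k) (n : ℤ) :
    Complex.Gamma (α - n - 1) / Complex.Gamma (-n - α) -
      Complex.Gamma (α + n - 1) / Complex.Gamma (n - α) =
    2 * n * (2 * α - 1) * Complex.Gamma (n + α - 1) / Complex.Gamma (n - α + 2) := by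
  have hy₀ : (n : ℂ) + α - 1 ≠ 0 := fun h ↦
    hα (1 - n) (by push_cast; linear_combination h)
  have hy₁ : (n : ℂ) + α - 1 + 1 ≠ 0 := fun h ↦
    hα (-n) (by push_cast; linear_combination h)
  have reflected : Complex.Gamma (α - n - 1) / Complex.Gamma (-n - α) =
      Complex.Gamma (n + α - 1 + 2) / Complex.Gamma (n - α + 2) := by
    convert complexGamma_neg_int_add_div_Gamma_add_one_sub hα (n + 1) using 3 <;> push_cast <;> ring
  rw [reflected, add_comm α, complexGamma_add_two_div_Gamma_add_two_sub hy₀ hy₁]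
  ring

/-- Gamma identity (Lemma A.4). -/
theorem stmt_19 (α : ℝ) (hα : ∀ k : ℤ, α ≠ (k : ℝ)) (n : ℕ) (hn : 1 ≤ n) :
    Real.Gamma (α - n - 1) / Real.Gamma (-(n : ℝ) - α) -
      Real.Gamma (α + n - 1) / Real.Gamma ((n : ℝ) - α) =
    2 * n * (2 * α - 1) * Real.Gamma ((n : ℝ) + α - 1) / Real.Gamma ((n : ℝ) - α + 2) := by
  apply Complex.ofReal_injective
  simpa [← Complex.Gamma_ofReal] using stmt_19_general α (by exact_mod_cast hα) n
end
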